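/- arXiv:1109.1900 — 7 statements merged into one kernel-verified Lean document; each statement's English description precedes it below -/
import Mathlib

section
/- Let H be a complex separable Hilbert space, let (φ_n)_{n≥1} and (φ'_n)_{n≥1} be two Hilbert bases of H, and let (λ_n)_{n≥1} and (λ'_n)_{n≥1} be two sequences of positive real numbers bounded below by a positive constant and tending to +∞. For s ≥ 0 define D(|A|^s) = {ψ ∈ H : Σ_n λ_n^{2s}|⟨φ_n,ψ⟩|² < ∞} and D(|A'|^s) = {ψ ∈ H : Σ_n (λ'_n)^{2s}|⟨φ'_n,ψ⟩|² < ∞}. Let k > 0. If D(|A|^k) = D(|A'|^k), then for every real s with 0 < s < k one has D(|A|^s) = D(|A'|^s). -/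
/-!
The inclusion `D(|A|^k) ⊆ D(|A'|^k)` is automatically bounded: applying the uniform boundedness
principle to truncations of `|A'|^k |A|^{-k}` gives `Σ ν |d|² ≤ C Σ μ |c|²`, where `c, d` are the
coefficients of a vector in the two bases, `μ = lam^(2k)` and `ν = lam'^(2k)`
(`exists_bound_of_dom_subset`).

The intermediate domains are then compared by real interpolation. For `r > 0` the quantity
`Σ μ / (r + μ) |c|²` is the quadratic K-functional of the pair `(H, D(|A|^k))`: it is the minimum
of `‖a‖² + r⁻¹ Σ μ |b|²` over splittings `ψ = a + b`, attained at `b = r (r + |A|^(2k))⁻¹ ψ`.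
Minimality in the primed basis together with the bound gives the inequality
`Σ ν / (r + ν) |d|² ≤ C Σ μ / (r + μ) |c|²` for every `r > 0` (`resolvent_bound`).
Finally `x ^ p`, for `0 < p < 1`, is an integral over `r` of nonnegative multiples of `x / (r + x)`,
so with `p = s / k` integration over `r` gives `Σ lam'^(2s) |d|² ≤ C Σ lam^(2s) |c|²`.
-/

/- STATEMENT 0: interpolation of the domains of powers of two diagonal
operators given by Hilbert bases `φ, φ'` and eigenvalue moduli `lam, lam'`. -/

open Filter

noncomputable section

/-- The domain `D(|A|^s)` of the `s`-th power of the modulus of the diagonal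
operator associated with the Hilbert basis `φ` and the sequence `lam`:
`{ψ : Σ_n lam_n^(2s) |⟨φ_n, ψ⟩|² < ∞}`. -/
def domAs {H : Type*} [NormedAddCommGroup H] [InnerProductSpace ℂ H]
    (φ : HilbertBasis ℕ ℂ H) (lam : ℕ → ℝ) (s : ℝ) : Set H :=
  {ψ : H | Summable fun n => lam n ^ (2 * s) * ‖φ.repr ψ n‖ ^ 2}

section Interpolation

variable {H : Type*} [NormedAddCommGroup H] [InnerProductSpace ℂ H]

lemma hasSum_sq_repr (φ : HilbertBasis ℕ ℂ H) (x : H) :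
    HasSum (fun n => ‖φ.repr x n‖ ^ 2) (‖x‖ ^ 2) := by
  have h1 := lp.norm_rpow_eq_tsum (p := 2) (by simp) (φ.repr x)
  have h2 := (memℓp_gen_iff (p := 2) (by simp)).1 (lp.memℓp (φ.repr x))
  simp only [ENNReal.toReal_ofNat, Real.rpow_ofNat, LinearIsometryEquiv.norm_map] at h1 h2
  rw [h1]
  exact h2.hasSum

lemma exists_repr_eq (φ : HilbertBasis ℕ ℂ H) (c : ℕ → ℂ)
    (hc : Summable fun n => ‖c n‖ ^ 2) : ∃ x : H, ∀ n, φ.repr x n = c n := by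
  have h : Memℓp c 2 := (memℓp_gen_iff (p := 2) (by simp)).2 (by simpa using hc)
  exact ⟨φ.repr.symm ⟨c, h⟩, fun n => by simp⟩

/-- A bounded real sequence `w` defines a bounded operator that is diagonal in the basis `φ`. -/
lemma exists_diag (φ : HilbertBasis ℕ ℂ H) (w : ℕ → ℝ) (B : ℝ) (hB : ∀ n, |w n| ≤ B) :
    ∃ M : H →L[ℂ] H, ∀ x n, φ.repr (M x) n = (w n : ℂ) * φ.repr x n := by
  have hB0 : 0 ≤ B := (abs_nonneg _).trans (hB 0)
  have hle : ∀ x n, ‖(w n : ℂ) * φ.repr x n‖ ^ 2 ≤ B ^ 2 * ‖φ.repr x n‖ ^ 2 := by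
    intro x n
    rw [norm_mul, mul_pow, Complex.norm_real, Real.norm_eq_abs]
    gcongr
    exact hB n
  have hs : ∀ x, Summable fun n => ‖(w n : ℂ) * φ.repr x n‖ ^ 2 := fun x =>
    .of_nonneg_of_le (fun n => by positivity) (hle x) ((hasSum_sq_repr φ x).summable.mul_left _)
  choose f hf using fun x => exists_repr_eq φ _ (hs x)
  let L : H →ₗ[ℂ] H :=
    { toFun := f
      map_add' := fun x y => φ.repr.injective <| lp.ext <| funext fun n => by
        simp only [hf, map_add, lp.coeFn_add, Pi.add_apply, mul_add]
      map_smul' := fun a x => φ.repr.injective <| lp.ext <| funext fun n => by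
        simp only [hf, map_smul, lp.coeFn_smul, Pi.smul_apply, smul_eq_mul, RingHom.id_apply]
        ring }
  refine ⟨L.mkContinuous B fun x => ?_, fun x n => hf x n⟩
  refine le_of_sq_le_sq ?_ (by positivity)
  rw [mul_pow]
  refine hasSum_le (fun n => ?_) (hasSum_sq_repr φ (L x)) ((hasSum_sq_repr φ x).mul_left (B ^ 2))
  exact (congrArg (fun z => ‖z‖ ^ 2) (hf x n)).le.trans (hle x n)

/-- An inclusion between weighted `ℓ²` domains is automatically bounded. -/
lemma exists_bound_of_dom_subset [CompleteSpace H] (φ φ' : HilbertBasis ℕ ℂ H) (μ ν : ℕ → ℝ)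
    (δ : ℝ) (hδ : 0 < δ) (hμ : ∀ n, δ ≤ μ n) (hν : ∀ n, 0 ≤ ν n)
    (h : ∀ ψ, (Summable fun n => μ n * ‖φ.repr ψ n‖ ^ 2) →
      Summable fun n => ν n * ‖φ'.repr ψ n‖ ^ 2) :
    ∃ C : ℝ, 1 ≤ C ∧ ∀ ψ, (Summable fun n => μ n * ‖φ.repr ψ n‖ ^ 2) →
      ∑' n, ν n * ‖φ'.repr ψ n‖ ^ 2 ≤ C * ∑' n, μ n * ‖φ.repr ψ n‖ ^ 2 := by
  have hμ0 : ∀ n, 0 < μ n := fun n => hδ.trans_le (hμ n)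
  obtain ⟨S, hS⟩ := exists_diag φ (fun n => (√(μ n))⁻¹) (√δ)⁻¹ (fun n => by
    rw [abs_of_nonneg (by positivity)]
    have := Real.sqrt_pos.2 hδ
    gcongr
    exact hμ n)
  have hT : ∀ N : ℕ, ∃ M : H →L[ℂ] H, ∀ x n,
      φ'.repr (M x) n = ((if n < N then √(ν n) else 0 : ℝ) : ℂ) * φ'.repr x n := by
    intro N
    refine exists_diag φ' _ (∑ i ∈ Finset.range N, √(ν i)) fun n => ?_
    split_ifs with hn
    · rw [abs_of_nonneg (by positivity)]
      exact Finset.single_le_sum (f := fun i => √(ν i)) (fun i _ => Real.sqrt_nonneg _)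
        (Finset.mem_range.2 hn)
    · rw [abs_zero]
      positivity
  choose T hT using hT
  have hTn : ∀ N x, ‖T N x‖ ^ 2 = ∑ n ∈ Finset.range N, ν n * ‖φ'.repr x n‖ ^ 2 := by
    intro N x
    rw [← (hasSum_sq_repr φ' (T N x)).tsum_eq, tsum_eq_sum (s := Finset.range N)]
    · refine Finset.sum_congr rfl fun n hn => ?_
      rw [hT, if_pos (Finset.mem_range.1 hn), norm_mul, mul_pow, Complex.norm_real,
        Real.norm_eq_abs, sq_abs, Real.sq_sqrt (hν n)]
    · intro n hn
      rw [hT, if_neg (by simpa using hn)]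
      simp
  have hSdom : ∀ x, Summable fun n => μ n * ‖φ.repr (S x) n‖ ^ 2 := by
    intro x
    refine (hasSum_sq_repr φ x).summable.congr fun n => ?_
    rw [hS, norm_mul, mul_pow, Complex.norm_real, Real.norm_eq_abs, sq_abs, inv_pow,
      Real.sq_sqrt (hμ0 n).le, mul_inv_cancel_left₀ (hμ0 n).ne']
  obtain ⟨C, hC⟩ := banach_steinhaus (g := fun N => (T N).comp S) (fun x => by
    refine ⟨√(∑' n, ν n * ‖φ'.repr (S x) n‖ ^ 2), fun N => Real.le_sqrt_of_sq_le ?_⟩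
    rw [ContinuousLinearMap.comp_apply, hTn]
    exact (h _ (hSdom x)).sum_le_tsum _ fun n _ => mul_nonneg (hν n) (by positivity))
  refine ⟨max 1 (C ^ 2), le_max_left _ _, fun ψ hψ => ?_⟩
  have hx2 : ∀ n, ‖((√(μ n) : ℝ) : ℂ) * φ.repr ψ n‖ ^ 2 = μ n * ‖φ.repr ψ n‖ ^ 2 := fun n => by
    rw [norm_mul, mul_pow, Complex.norm_real, Real.norm_eq_abs, sq_abs, Real.sq_sqrt (hμ0 n).le]
  obtain ⟨x, hx⟩ := exists_repr_eq φ (fun n => ((√(μ n) : ℝ) : ℂ) * φ.repr ψ n)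
    (hψ.congr fun n => (hx2 n).symm)
  have hSx : S x = ψ := φ.repr.injective <| lp.ext <| funext fun n => by
    have : ((√(μ n) : ℝ) : ℂ) ≠ 0 := by
      exact_mod_cast (Real.sqrt_pos.2 (hμ0 n)).ne'
    rw [hS, hx, Complex.ofReal_inv, inv_mul_cancel_left₀ this]
  have hxn : ‖x‖ ^ 2 = ∑' n, μ n * ‖φ.repr ψ n‖ ^ 2 := by
    rw [← (hasSum_sq_repr φ x).tsum_eq]
    exact tsum_congr fun n => by rw [hx, hx2]
  refine Real.tsum_le_of_sum_range_le (fun n => mul_nonneg (hν n) (by positivity)) fun N => ?_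
  rw [← hTn, ← hxn]
  have h1 : ‖T N ψ‖ ≤ C * ‖x‖ := by
    have := ((T N).comp S).le_of_opNorm_le (hC N) x
    rwa [ContinuousLinearMap.comp_apply, hSx] at this
  calc ‖T N ψ‖ ^ 2 ≤ (C * ‖x‖) ^ 2 := by gcongr
    _ = C ^ 2 * ‖x‖ ^ 2 := mul_pow _ _ _
    _ ≤ max 1 (C ^ 2) * ‖x‖ ^ 2 := by
      gcongr
      exact le_max_right _ _

lemma summable_resolvent (φ : HilbertBasis ℕ ℂ H) (μ : ℕ → ℝ) (hμ : ∀ n, 0 < μ n) (r : ℝ)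
    (hr : 0 < r) (ψ : H) : Summable fun n => μ n / (r + μ n) * ‖φ.repr ψ n‖ ^ 2 := by
  refine .of_nonneg_of_le (fun n => ?_) (fun n => ?_) (hasSum_sq_repr φ ψ).summable
  · have := hμ n
    positivity
  · have := hμ n
    refine mul_le_of_le_one_left (by positivity) ?_
    rw [div_le_one (by positivity)]
    linarith

/-- Minimality of the quadratic K-functional for the one-dimensional weight `x`. -/
lemma resolvent_split (x r : ℝ) (hx : 0 < x) (hr : 0 < r) (a b : ℂ) :
    x / (r + x) * ‖a + b‖ ^ 2 ≤ ‖a‖ ^ 2 + r⁻¹ * (x * ‖b‖ ^ 2) := by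
  have h1 : ‖a + b‖ ^ 2 ≤ (‖a‖ + ‖b‖) ^ 2 := by
    gcongr
    exact norm_add_le a b
  have h2 : x / (r + x) * ‖a + b‖ ^ 2 ≤ x / (r + x) * (‖a‖ + ‖b‖) ^ 2 := by gcongr
  refine h2.trans ?_
  rw [div_mul_eq_mul_div, div_le_iff₀ (by positivity)]
  have key : (‖a‖ ^ 2 + r⁻¹ * (x * ‖b‖ ^ 2)) * (r + x) - x * (‖a‖ + ‖b‖) ^ 2
      = r⁻¹ * (r * ‖a‖ - x * ‖b‖) ^ 2 := by
    field_simp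
    ring
  have : 0 ≤ r⁻¹ * (r * ‖a‖ - x * ‖b‖) ^ 2 := by positivity
  linarith

/-- Comparison of the quadratic K-functionals at a fixed parameter `r`. -/
lemma resolvent_bound (φ φ' : HilbertBasis ℕ ℂ H) (μ ν : ℕ → ℝ)
    (hμ : ∀ n, 0 < μ n) (hν : ∀ n, 0 < ν n)
    (h : ∀ ψ, (Summable fun n => μ n * ‖φ.repr ψ n‖ ^ 2) →
      Summable fun n => ν n * ‖φ'.repr ψ n‖ ^ 2)
    (C : ℝ) (hC1 : 1 ≤ C)
    (hC : ∀ ψ, (Summable fun n => μ n * ‖φ.repr ψ n‖ ^ 2) →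
      ∑' n, ν n * ‖φ'.repr ψ n‖ ^ 2 ≤ C * ∑' n, μ n * ‖φ.repr ψ n‖ ^ 2)
    (r : ℝ) (hr : 0 < r) (ψ : H) :
    ∑' n, ν n / (r + ν n) * ‖φ'.repr ψ n‖ ^ 2
      ≤ C * ∑' n, μ n / (r + μ n) * ‖φ.repr ψ n‖ ^ 2 := by
  -- the optimal splitting `ψ = (ψ - b) + b`
  obtain ⟨M, hM⟩ := exists_diag φ (fun n => r / (r + μ n)) 1 (fun n => by
    have := hμ n
    rw [abs_of_nonneg (by positivity), div_le_one (by positivity)]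
    linarith)
  set b := M ψ with hb
  have hbn : ∀ n, ‖φ.repr b n‖ ^ 2 = (r / (r + μ n)) ^ 2 * ‖φ.repr ψ n‖ ^ 2 := fun n => by
    rw [hb, hM, norm_mul, mul_pow, Complex.norm_real, Real.norm_eq_abs, sq_abs]
  have han : ∀ n, ‖φ.repr (ψ - b) n‖ ^ 2 = (μ n / (r + μ n)) ^ 2 * ‖φ.repr ψ n‖ ^ 2 := fun n => by
    have h0 : r + μ n ≠ 0 := (add_pos hr (hμ n)).ne'
    have : φ.repr (ψ - b) n = ((μ n / (r + μ n) : ℝ) : ℂ) * φ.repr ψ n := by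
      rw [map_sub, lp.coeFn_sub, Pi.sub_apply, hb, hM,
        show μ n / (r + μ n) = 1 - r / (r + μ n) by field_simp; ring]
      push_cast
      ring
    rw [this, norm_mul, mul_pow, Complex.norm_real, Real.norm_eq_abs, sq_abs]
  have hopt : ∀ n, ‖φ.repr (ψ - b) n‖ ^ 2 + r⁻¹ * (μ n * ‖φ.repr b n‖ ^ 2)
      = μ n / (r + μ n) * ‖φ.repr ψ n‖ ^ 2 := fun n => by
    have h0 : r + μ n ≠ 0 := (add_pos hr (hμ n)).ne'
    rw [han, hbn]
    field_simp
    ring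
  have hsum := summable_resolvent φ μ hμ r hr ψ
  have hbdom : Summable fun n => μ n * ‖φ.repr b n‖ ^ 2 := by
    refine (hsum.mul_left r).of_nonneg_of_le
      (fun n => mul_nonneg (hμ n).le (by positivity)) fun n => ?_
    rw [← hopt, mul_add, mul_inv_cancel_left₀ hr.ne']
    have : 0 ≤ r * ‖φ.repr (ψ - b) n‖ ^ 2 := by positivity
    linarith
  have hb' := h b hbdom
  have ha' := hasSum_sq_repr φ' (ψ - b)
  have ha := hasSum_sq_repr φ (ψ - b)
  calc ∑' n, ν n / (r + ν n) * ‖φ'.repr ψ n‖ ^ 2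
      ≤ ∑' n, (‖φ'.repr (ψ - b) n‖ ^ 2 + r⁻¹ * (ν n * ‖φ'.repr b n‖ ^ 2)) := by
        refine (summable_resolvent φ' ν hν r hr ψ).tsum_le_tsum (fun n => ?_)
          (ha'.summable.add (hb'.mul_left _))
        have := resolvent_split (ν n) r (hν n) hr (φ'.repr (ψ - b) n) (φ'.repr b n)
        rwa [← Pi.add_apply, ← lp.coeFn_add, ← map_add, sub_add_cancel] at this
    _ = ‖ψ - b‖ ^ 2 + r⁻¹ * ∑' n, ν n * ‖φ'.repr b n‖ ^ 2 := by
        rw [ha'.summable.tsum_add (hb'.mul_left _), tsum_mul_left, ha'.tsum_eq]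
    _ ≤ C * ‖ψ - b‖ ^ 2 + r⁻¹ * (C * ∑' n, μ n * ‖φ.repr b n‖ ^ 2) := by
        gcongr
        · exact le_mul_of_one_le_left (by positivity) hC1
        · exact hC b hbdom
    _ = C * (‖ψ - b‖ ^ 2 + r⁻¹ * ∑' n, μ n * ‖φ.repr b n‖ ^ 2) := by ring
    _ = C * ∑' n, μ n / (r + μ n) * ‖φ.repr ψ n‖ ^ 2 := by
        rw [← ha.tsum_eq, ← tsum_mul_left, ← ha.summable.tsum_add (hbdom.mul_left _)]
        simp only [hopt]

open MeasureTheory Real in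
/-- Layer-cake form of `Σ μ^p |c|²` for a measure `σ` representing `x ^ p`. -/
lemma tsum_rpow_eq_lintegral {p : ℝ} (hp : p ∈ Set.Ioo (0 : ℝ) 1) (σ : Measure ℝ)
    (hσ : ∀ x ∈ Set.Ici (0 : ℝ), IntegrableOn (fun t => rpowIntegrand₀₁ p t x) (Set.Ioi 0) σ
      ∧ x ^ p = ∫ t in Set.Ioi 0, rpowIntegrand₀₁ p t x ∂σ)
    (φ : HilbertBasis ℕ ℂ H) (μ : ℕ → ℝ) (hμ : ∀ n, 0 < μ n) (ψ : H) :
    ∑' n, ENNReal.ofReal (μ n ^ p * ‖φ.repr ψ n‖ ^ 2)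
      = ∫⁻ r in Set.Ioi 0, ENNReal.ofReal
          (r ^ (p - 1) * ∑' n, μ n / (r + μ n) * ‖φ.repr ψ n‖ ^ 2) ∂σ := by
  have hint := fun n => ((hσ (μ n) (hμ n).le).1).mul_const (‖φ.repr ψ n‖ ^ 2)
  have hterm : ∀ n, ENNReal.ofReal (μ n ^ p * ‖φ.repr ψ n‖ ^ 2)
      = ∫⁻ r in Set.Ioi 0,
          ENNReal.ofReal (rpowIntegrand₀₁ p r (μ n) * ‖φ.repr ψ n‖ ^ 2) ∂σ := by
    intro n
    rw [(hσ (μ n) (hμ n).le).2, ← integral_mul_const, ofReal_integral_eq_lintegral_ofReal (hint n)]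
    filter_upwards [ae_restrict_mem measurableSet_Ioi] with r hr
    exact mul_nonneg (rpowIntegrand₀₁_nonneg hp.1 (le_of_lt hr) (hμ n).le) (by positivity)
  rw [tsum_congr hterm, ← lintegral_tsum fun n => (hint n).1.aemeasurable.ennreal_ofReal]
  refine setLIntegral_congr_fun measurableSet_Ioi fun r hr => ?_
  have hr : 0 < r := hr
  have hs := (summable_resolvent φ μ hμ r hr ψ).mul_left (r ^ (p - 1))
  rw [← tsum_mul_left, ENNReal.ofReal_tsum_of_nonneg (fun n => ?_) hs]
  · refine tsum_congr fun n => ?_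
    rw [rpowIntegrand₀₁_eq_pow_div hp hr.le (hμ n).le]
    congr 1
    ring
  · have := hμ n
    positivity

open MeasureTheory Real in
lemma summable_interpolation [CompleteSpace H] (φ φ' : HilbertBasis ℕ ℂ H) (μ ν : ℕ → ℝ)
    (δ : ℝ) (hδ : 0 < δ) (hμ : ∀ n, δ ≤ μ n) (hν : ∀ n, 0 < ν n)
    (h : ∀ ψ, (Summable fun n => μ n * ‖φ.repr ψ n‖ ^ 2) →
      Summable fun n => ν n * ‖φ'.repr ψ n‖ ^ 2)
    {p : ℝ} (hp : p ∈ Set.Ioo (0 : ℝ) 1) (ψ : H)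
    (hψ : Summable fun n => μ n ^ p * ‖φ.repr ψ n‖ ^ 2) :
    Summable fun n => ν n ^ p * ‖φ'.repr ψ n‖ ^ 2 := by
  have hμ0 : ∀ n, 0 < μ n := fun n => hδ.trans_le (hμ n)
  obtain ⟨C, hC1, hC⟩ := exists_bound_of_dom_subset φ φ' μ ν δ hδ hμ (fun n => (hν n).le) h
  obtain ⟨σ, hσ⟩ := exists_measure_rpow_eq_integral_rpowIntegrand₀₁ hp
  have hle : ∑' n, ENNReal.ofReal (ν n ^ p * ‖φ'.repr ψ n‖ ^ 2)
      ≤ ENNReal.ofReal C * ∑' n, ENNReal.ofReal (μ n ^ p * ‖φ.repr ψ n‖ ^ 2) := by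
    rw [tsum_rpow_eq_lintegral hp σ hσ φ' ν hν, tsum_rpow_eq_lintegral hp σ hσ φ μ hμ0,
      ← lintegral_const_mul' _ _ ENNReal.ofReal_ne_top]
    refine setLIntegral_mono' measurableSet_Ioi fun r hr => ?_
    have hr : 0 < r := hr
    rw [← ENNReal.ofReal_mul (zero_le_one.trans hC1), mul_left_comm]
    gcongr
    exact resolvent_bound φ φ' μ ν hμ0 hν h C hC1 hC r hr ψ
  have hfin : ∑' n, ENNReal.ofReal (ν n ^ p * ‖φ'.repr ψ n‖ ^ 2) ≠ ⊤ :=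
    ne_top_of_le_ne_top (ENNReal.mul_ne_top ENNReal.ofReal_ne_top hψ.tsum_ofReal_ne_top) hle
  refine (ENNReal.summable_toReal hfin).congr fun n => ENNReal.toReal_ofReal ?_
  have := hν n
  positivity

lemma domAs_subset [CompleteSpace H] (φ φ' : HilbertBasis ℕ ℂ H) (lam lam' : ℕ → ℝ)
    (m m' : ℝ) (hm : 0 < m) (hm' : 0 < m')
    (hlam : ∀ n, m ≤ lam n) (hlam' : ∀ n, m' ≤ lam' n) (k : ℝ) (hk : 0 < k)
    (hdom : domAs φ lam k ⊆ domAs φ' lam' k) (s : ℝ) (hs : 0 < s) (hsk : s < k) :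
    domAs φ lam s ⊆ domAs φ' lam' s := by
  have hpow : ∀ x : ℝ, 0 < x → (x ^ (2 * k)) ^ (s / k) = x ^ (2 * s) := fun x hx => by
    rw [← Real.rpow_mul hx.le]
    congr 1
    field_simp
  intro ψ hψ
  have := summable_interpolation φ φ' (fun n => lam n ^ (2 * k)) (fun n => lam' n ^ (2 * k))
    (m ^ (2 * k)) (by positivity) (fun n => Real.rpow_le_rpow hm.le (hlam n) (by positivity))
    (fun n => Real.rpow_pos_of_pos (hm'.trans_le (hlam' n)) _) (fun ψ hψ => hdom hψ)
    (p := s / k) ⟨by positivity, (div_lt_one hk).2 hsk⟩ ψ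
    (hψ.congr fun n => by rw [hpow _ (hm.trans_le (hlam n))])
  exact this.congr fun n => by rw [hpow _ (hm'.trans_le (hlam' n))]

end Interpolation

theorem stmt0 {H : Type*} [NormedAddCommGroup H] [InnerProductSpace ℂ H] [CompleteSpace H]
    (φ φ' : HilbertBasis ℕ ℂ H) (lam lam' : ℕ → ℝ)
    (m m' : ℝ) (hm : 0 < m) (hm' : 0 < m')
    (hlam_lb : ∀ n, m ≤ lam n) (hlam'_lb : ∀ n, m' ≤ lam' n)
    (hlam_top : Tendsto lam atTop atTop) (hlam'_top : Tendsto lam' atTop atTop)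
    (k : ℝ) (hk : 0 < k)
    (hdom : domAs φ lam k = domAs φ' lam' k) :
    ∀ s : ℝ, 0 < s → s < k → domAs φ lam s = domAs φ' lam' s := by
  intro s hs hsk
  exact (domAs_subset φ φ' lam lam' m m' hm hm' hlam_lb hlam'_lb k hk hdom.le s hs hsk).antisymm
    (domAs_subset φ' φ lam' lam m' m hm' hm hlam'_lb hlam_lb k hk hdom.ge s hs hsk)
end
end

section
/- Let k > 0, c ≥ 0, and let B_1,…,B_p be linear maps of H defined (at least) on D(|A|^k) and satisfying the k-weak-coupling inequality |Re⟨|A|^k ψ, B_l ψ⟩| ≤ c · ⟨|A|^k ψ, ψ⟩ for every ψ ∈ D(|A|^k) and every l = 1,…,p. Let T ≥ 0, let u = (u_1,…,u_p) : [0,T] → ℝ^p be piecewise constant with K := Σ_{l=1}^p ∫_0^T |u_l(t)| dt, and let ψ : [0,T] → D(|A|^k) be a curve with ψ(0) = ψ₀ such that the function f(t) := ⟨|A|^k ψ(t), ψ(t)⟩ is absolutely continuous on [0,T] with f'(t) = 2 Σ_{l=1}^p u_l(t) Re⟨|A|^k ψ(t), B_l ψ(t)⟩ for almost every t. Then ‖ψ(T)‖_{k/2}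 ≤ e^{cK} ‖ψ₀‖_{k/2}. -/
/-!
Write `f t = ⟨|A|^k ψ(t), ψ(t)⟩ = ‖ψ(t)‖²_{k/2}`. The weak-coupling inequality bounds the density of
`f` by `g t ≤ b t * f t` with `b t = 2 c ∑ l, |u l t|`, so Grönwall's inequality gives
`f T ≤ exp (∫ b) * f 0 = exp (2 c K) * f 0`, and the claim follows by taking square roots.

Since `f` and the primitive of `b` are only absolutely continuous, Grönwall's inequality is proved
here in that setting (`gronwall_of_integral_eq`): the product `f * exp (-∫ b)` is absolutely
continuous, its derivative is a.e. nonpositive by Lebesgue differentiation, and the fundamental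
theorem of calculus for absolutely continuous functions shows that the product does not increase.
Integrability of `b` comes from the controls being piecewise constant.
-/

/- STATEMENT 2: growth of the energy `⟨|A|^k ψ(t), ψ(t)⟩` along a trajectory of a
k-weakly-coupled bilinear system driven by a piecewise constant control:
`‖ψ(T)‖_{k/2} ≤ e^{cK} ‖ψ₀‖_{k/2}`. -/

open Filter MeasureTheory
open scoped ComplexInnerProductSpace

noncomputable section

/-- The `s`-norm `‖ψ‖_s = (Σ_n lam_n^(2s) |⟨φ_n,ψ⟩|²)^(1/2)`. -/
def sNorm {H : Type*} [NormedAddCommGroup H] [InnerProductSpace ℂ H]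
    (φ : HilbertBasis ℕ ℂ H) (lam : ℕ → ℝ) (s : ℝ) (ψ : H) : ℝ :=
  Real.sqrt (∑' n, lam n ^ (2 * s) * ‖φ.repr ψ n‖ ^ 2)

/-- `|A|^s ψ = Σ_n lam_n^s ⟨φ_n,ψ⟩ φ_n`. -/
def absApow {H : Type*} [NormedAddCommGroup H] [InnerProductSpace ℂ H] [CompleteSpace H]
    (φ : HilbertBasis ℕ ℂ H) (lam : ℕ → ℝ) (s : ℝ) (ψ : H) : H :=
  ∑' n, lam n ^ s • (φ.repr ψ n • φ n)

/-- `u` is piecewise constant on `[0,T]`. -/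
def PiecewiseConstant (u : ℝ → ℝ) (T : ℝ) : Prop :=
  ∃ (m : ℕ) (pts : Fin (m + 1) → ℝ) (vals : Fin m → ℝ),
    pts 0 = 0 ∧ pts (Fin.last m) = T ∧ Monotone pts ∧
      ∀ i : Fin m, ∀ t ∈ Set.Ico (pts i.castSucc) (pts i.succ), u t = vals i

/-- The value `u T` is left arbitrary by the definition, which is harmless for integrability: each
half-open piece `[pts i, pts (i + 1))` carries a constant, and its right end is a null set. -/
lemma PiecewiseConstant.intervalIntegrable {u : ℝ → ℝ} {T : ℝ} (h : PiecewiseConstant u T) :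
    IntervalIntegrable u volume 0 T := by
  obtain ⟨m, pts, vals, h0, hT, hmono, hval⟩ := h
  -- The subdivision is extended to all of `ℕ` by a constant in order to apply `trans_iterate`.
  let a : ℕ → ℝ := fun n => pts ⟨min n m, by omega⟩
  have key : IntervalIntegrable u volume (a 0) (a m) := by
    refine IntervalIntegrable.trans_iterate fun i hi => ?_
    have e1 : a i = pts (Fin.castSucc ⟨i, hi⟩) := by
      simp only [a]; congr 1; ext; simp; omega
    have e2 : a (i + 1) = pts (Fin.succ ⟨i, hi⟩) := by
      simp only [a]; congr 1; ext; simp; omega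
    rw [e1, e2, intervalIntegrable_iff_integrableOn_Ico_of_le
      (hmono (Fin.castSucc_lt_succ).le)]
    have hconst : IntegrableOn (fun _ : ℝ => vals ⟨i, hi⟩)
        (Set.Ico (pts (Fin.castSucc ⟨i, hi⟩)) (pts (Fin.succ ⟨i, hi⟩))) volume :=
      integrableOn_const (by simp)
    exact hconst.congr_fun (fun t ht => (hval ⟨i, hi⟩ t ht).symm) measurableSet_Ico
  have ea : a 0 = 0 := by
    rw [← h0]; simp only [a]; congr 1
  have eb : a m = T := by
    rw [← hT]; simp only [a]; congr 1; ext; simp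
  rwa [ea, eb] at key

/-- `x ↦ exp (-x)` is `1`-Lipschitz on `[0, ∞)`. -/
lemma dist_exp_neg_le {x y : ℝ} (hx : 0 ≤ x) (hy : 0 ≤ y) :
    dist (Real.exp (-x)) (Real.exp (-y)) ≤ dist x y := by
  wlog hxy : x ≤ y generalizing x y
  · rw [dist_comm, dist_comm x y]
    exact this hy hx (le_of_not_ge hxy)
  have h1 : Real.exp (-y) ≤ Real.exp (-x) := Real.exp_le_exp.2 (by linarith)
  have h2 : Real.exp (-x) ≤ 1 := Real.exp_le_one_iff.2 (by linarith)
  have h3 := Real.add_one_le_exp (x - y)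
  have h4 : Real.exp (-y) = Real.exp (-x) * Real.exp (x - y) := by
    rw [← Real.exp_add]; ring_nf
  rw [Real.dist_eq, Real.dist_eq, abs_of_nonneg (by linarith), abs_of_nonpos (by linarith)]
  nlinarith [Real.exp_pos (-x)]

lemma AbsolutelyContinuousOnInterval.exp_neg {W : ℝ → ℝ} {a b : ℝ}
    (hW : AbsolutelyContinuousOnInterval W a b) (hpos : ∀ x ∈ Set.uIcc a b, 0 ≤ W x) :
    AbsolutelyContinuousOnInterval (fun x => Real.exp (-W x)) a b := by
  rw [absolutelyContinuousOnInterval_iff] at hW ⊢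
  intro ε hε
  obtain ⟨δ, hδ, h⟩ := hW ε hε
  refine ⟨δ, hδ, fun E hE hlt => lt_of_le_of_lt (Finset.sum_le_sum fun i hi => ?_) (h E hE hlt)⟩
  have hm := hE.1 i hi
  exact dist_exp_neg_le (hpos _ hm.1) (hpos _ hm.2)

/-- Grönwall's inequality for an absolutely continuous function `f` with density `g ≤ b * f`,
where the rate `b ≥ 0` need only be integrable, not continuous. -/
lemma gronwall_of_integral_eq {f g b : ℝ → ℝ} {T : ℝ} (hT : 0 ≤ T)
    (hg : IntervalIntegrable g volume 0 T) (hb : IntervalIntegrable b volume 0 T)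
    (hb0 : ∀ t ∈ Set.Icc (0 : ℝ) T, 0 ≤ b t)
    (hgb : ∀ t ∈ Set.Icc (0 : ℝ) T, g t ≤ b t * f t)
    (hAC : ∀ t ∈ Set.Icc (0 : ℝ) T, f t = f 0 + ∫ τ in (0 : ℝ)..t, g τ) :
    f T ≤ Real.exp (∫ t in (0 : ℝ)..T, b t) * f 0 := by
  have hu : Set.uIcc 0 T = Set.Icc 0 T := Set.uIcc_of_le hT
  have h0 : (0 : ℝ) ∈ Set.uIcc 0 T := Set.left_mem_uIcc
  -- `F` equals `f` on `[0, T]`, but is differentiable from both sides at a.e. point.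
  set F : ℝ → ℝ := fun t => f 0 + ∫ τ in (0 : ℝ)..t, g τ with hF
  set W : ℝ → ℝ := fun t => ∫ τ in (0 : ℝ)..t, b τ with hW
  have hconst : AbsolutelyContinuousOnInterval (fun _ : ℝ => f 0) 0 T :=
    (LipschitzWith.const (f 0)).lipschitzOnWith.absolutelyContinuousOnInterval
  have hFac : AbsolutelyContinuousOnInterval F 0 T :=
    hconst.add (hg.absolutelyContinuousOnInterval_intervalIntegral h0)
  have hW0 : ∀ x ∈ Set.uIcc 0 T, 0 ≤ W x := by
    intro x hx
    rw [hu] at hx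
    exact intervalIntegral.integral_nonneg hx.1 fun t ht => hb0 t ⟨ht.1, ht.2.trans hx.2⟩
  have hEac : AbsolutelyContinuousOnInterval (fun x => Real.exp (-W x)) 0 T :=
    (hb.absolutelyContinuousOnInterval_intervalIntegral h0).exp_neg hW0
  have hprod := (hFac.fun_mul hEac).integral_deriv_eq_sub
  have hle : ∀ᵐ x, x ∈ Set.Icc 0 T → deriv (fun x => F x * Real.exp (-W x)) x ≤ 0 := by
    filter_upwards [hg.ae_hasDerivAt_integral, hb.ae_hasDerivAt_integral] with x h1 h2 hx
    rw [hu] at h1 h2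
    have h00 : (0 : ℝ) ∈ Set.Icc 0 T := ⟨le_rfl, hT⟩
    have d1 : HasDerivAt F (g x) x := (h1 hx 0 h00).const_add (f 0)
    have d2 : HasDerivAt W (b x) x := h2 hx 0 h00
    have d3 : HasDerivAt (fun x => F x * Real.exp (-W x))
        (g x * Real.exp (-W x) + F x * (Real.exp (-W x) * -b x)) x := d1.mul d2.neg.exp
    rw [d3.deriv]
    have hfx : F x = f x := (hAC x hx).symm
    have := hgb x hx
    rw [hfx]
    nlinarith [Real.exp_pos (-W x)]
  have hint : ∫ x in (0 : ℝ)..T, deriv (fun x => F x * Real.exp (-W x)) x ≤ 0 := by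
    have hneg : 0 ≤ ∫ x in (0 : ℝ)..T, -deriv (fun x => F x * Real.exp (-W x)) x := by
      refine intervalIntegral.integral_nonneg_of_ae_restrict hT ?_
      rw [Filter.EventuallyLE, ae_restrict_iff' measurableSet_Icc]
      filter_upwards [hle] with x h hx
      simpa using h hx
    rw [intervalIntegral.integral_neg] at hneg
    linarith
  have hFT : F T = f T := (hAC T ⟨hT, le_rfl⟩).symm
  have hF0 : F 0 = f 0 := by simp [hF]
  have hWz : W 0 = 0 := by simp [hW]
  rw [hprod, hFT, hF0, hWz, neg_zero, Real.exp_zero, mul_one] at hint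
  have e : f T = Real.exp (W T) * (f T * Real.exp (-W T)) := by
    rw [mul_comm (f T), ← mul_assoc, ← Real.exp_add]; simp
  rw [e]
  exact mul_le_mul_of_nonneg_left (by linarith) (Real.exp_pos _).le

theorem stmt2 {H : Type*} [NormedAddCommGroup H] [InnerProductSpace ℂ H] [CompleteSpace H]
    (φ : HilbertBasis ℕ ℂ H) (lam : ℕ → ℝ)
    (hpos : ∀ n, 0 < lam n) (hmono : Monotone lam) (htop : Tendsto lam atTop atTop)
    (k : ℝ) (hk : 0 < k) (c : ℝ) (hc : 0 ≤ c)
    (p : ℕ) (B : Fin p → H → H) (hBlin : ∀ l, IsLinearMap ℂ (B l))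
    -- k-weak-coupling inequality
    (hwc : ∀ l, ∀ ψ ∈ domAs φ lam k,
      |(⟪absApow φ lam k ψ, B l ψ⟫).re| ≤ c * ∑' n, lam n ^ k * ‖φ.repr ψ n‖ ^ 2)
    (T : ℝ) (hT : 0 ≤ T)
    (u : Fin p → ℝ → ℝ) (hu : ∀ l, PiecewiseConstant (u l) T)
    (K : ℝ) (hK : K = ∑ l, ∫ t in (0 : ℝ)..T, |u l t|)
    (ψ : ℝ → H) (ψ₀ : H) (hψ₀ : ψ 0 = ψ₀)
    (hdom : ∀ t ∈ Set.Icc (0 : ℝ) T, ψ t ∈ domAs φ lam k)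
    (f g : ℝ → ℝ)
    (hf : ∀ t, f t = ∑' n, lam n ^ k * ‖φ.repr (ψ t) n‖ ^ 2)
    (hg : ∀ t, g t = 2 * ∑ l, u l t * (⟪absApow φ lam k (ψ t), B l (ψ t)⟫).re)
    (hgint : IntervalIntegrable g volume 0 T)
    -- `f` absolutely continuous with a.e. derivative `g`, in integrated form
    (hAC : ∀ t ∈ Set.Icc (0 : ℝ) T, f t = f 0 + ∫ τ in (0 : ℝ)..t, g τ) :
    sNorm φ lam (k / 2) (ψ T) ≤ Real.exp (c * K) * sNorm φ lam (k / 2) ψ₀ := by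
  have hui : ∀ l, IntervalIntegrable (fun t => |u l t|) volume 0 T :=
    fun l => (hu l).intervalIntegrable.abs
  have hsum : IntervalIntegrable (fun t => ∑ l, |u l t|) volume 0 T := by
    convert! IntervalIntegrable.sum Finset.univ fun l _ => hui l using 1
    ext t
    simp
  have hbK : ∫ t in (0 : ℝ)..T, 2 * c * ∑ l, |u l t| = 2 * (c * K) := by
    rw [intervalIntegral.integral_const_mul,
      intervalIntegral.integral_finsetSum fun l _ => hui l, hK]
    ring
  have hfT : f T ≤ Real.exp (2 * (c * K)) * f 0 := by
    rw [← hbK]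
    refine gronwall_of_integral_eq hT hgint (hsum.const_mul (2 * c)) (fun t _ => by positivity)
      (fun t ht => ?_) hAC
    calc g t = 2 * ∑ l, u l t * (⟪absApow φ lam k (ψ t), B l (ψ t)⟫).re := hg t
      _ ≤ 2 * ∑ l, |u l t| * (c * f t) := by
        refine mul_le_mul_of_nonneg_left (Finset.sum_le_sum fun l _ => ?_) zero_le_two
        refine (le_abs_self _).trans ?_
        rw [abs_mul, hf t]
        exact mul_le_mul_of_nonneg_left (hwc l _ (hdom t ht)) (abs_nonneg _)
      _ = 2 * c * (∑ l, |u l t|) * f t := by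
        rw [← Finset.sum_mul]; ring
  have hs : ∀ t, sNorm φ lam (k / 2) (ψ t) = Real.sqrt (f t) := by
    intro t
    rw [sNorm, hf t, show 2 * (k / 2) = k by ring]
  have hexp : Real.exp (2 * (c * K)) = Real.exp (c * K) ^ 2 := by
    rw [← Real.exp_nat_mul]; norm_num
  rw [← hψ₀, hs, hs]
  calc Real.sqrt (f T) ≤ Real.sqrt (Real.exp (c * K) ^ 2 * f 0) :=
        Real.sqrt_le_sqrt (hexp ▸ hfT)
    _ = Real.exp (c * K) * Real.sqrt (f 0) := by
        rw [Real.sqrt_mul (by positivity), Real.sqrt_sq (Real.exp_pos _).le]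
end
end

section
/- Let B be tridiagonal with matrix elements b_{j,k}, assume the sequence (λ_{n+1}/λ_n)_{n≥1} is bounded and that b_{n,n−1}/λ_n → 0, b_{n,n}/λ_n → 0, and b_{n,n+1}/λ_{n+1} → 0 as n → ∞. Then for every real r ≥ 0 and every ε > 0 there exists a constant C_ε such that for all v ∈ D(|A|^{r+1}): ‖Bv‖_r² ≤ C_ε ‖v‖² + ε ‖v‖²_{r+1}, i.e. Σ_n λ_n^{2r} |b_{n,n−1} v_{n−1} + b_{n,n} v_n + b_{n,n+1} v_{n+1}|² ≤ C_ε Σ_n |v_n|² + ε Σ_n λ_n^{2r+2} |v_n|², where v_j := ⟨φ_j, v⟩. In particular B is bounded from D(|A|^{r+1}) to D(|A|^r) with arbitrarily small relative bound with respect to |A|^{r+1}. -/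
/-!
Since `‖x + y + z‖² ≤ 3 (‖x‖² + ‖y‖² + ‖z‖²)`, the `n`-th term of `‖Bv‖_r²` splits into three
parts, each being a coefficient times `‖v k‖²` with `k ∈ {n - 1, n, n + 1}`. The decay of the matrix
elements and, for `k = n - 1`, the bounded ratios `lam (n + 1) / lam n` show that this coefficient is
`o (lam k ^ (2 r + 2))`, hence at most `K + δ * lam k ^ (2 r + 2)` for any `δ > 0` and a suitable `K`
(`exists_const_add_bound`). With `G k = K * ‖v k‖² + δ * lam k ^ (2 r + 2) * ‖v k‖²`, the `n`-th term
is at most `3 (G (n - 1) + G n + G (n + 1))`, and summing the shifts gives `‖Bv‖_r² ≤ 9 ∑ G`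
(`tsum_le_nine_mul`); `δ = ε / 9` concludes.
-/

/- STATEMENT 9: a tridiagonal operator `B` with `b_{n,n−1}/λ_n → 0`, `b_{n,n}/λ_n → 0`,
`b_{n,n+1}/λ_{n+1} → 0` is bounded from `D(|A|^{r+1})` to `D(|A|^r)` with arbitrarily
small relative bound: `‖Bv‖_r² ≤ C_ε ‖v‖² + ε ‖v‖²_{r+1}`. -/

open Filter Topology

noncomputable section

/-- A sequence `c = o(d)`, with explicit rate `D * x` where `x → 0`, is at most `K + δ * d`:
the constant `K` absorbs the finitely many initial terms. -/
lemma exists_const_add_bound (c d x : ℕ → ℝ) (D δ : ℝ) (hδ : 0 < δ) (hd : ∀ n, 0 ≤ d n)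
    (hx : Tendsto x atTop (𝓝 0)) (h : ∀ n, c n ≤ D * x n * d n) :
    ∃ K : ℝ, 0 ≤ K ∧ ∀ n, c n ≤ K + δ * d n := by
  have h1 : Tendsto (fun n => D * x n) atTop (𝓝 0) := by simpa using hx.const_mul D
  obtain ⟨N, hN⟩ := eventually_atTop.1 (h1.eventually (gt_mem_nhds hδ))
  refine ⟨∑ i ∈ Finset.range N, |c i|, Finset.sum_nonneg fun i _ => abs_nonneg _, fun n => ?_⟩
  have hdn := mul_nonneg hδ.le (hd n)
  rcases lt_or_ge n N with hn | hn
  · have h2 : |c n| ≤ ∑ i ∈ Finset.range N, |c i| :=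
      Finset.single_le_sum (f := fun i => |c i|) (fun i _ => abs_nonneg _)
        (Finset.mem_range.2 hn)
    linarith [le_abs_self (c n)]
  · have h2 : 0 ≤ ∑ i ∈ Finset.range N, |c i| := Finset.sum_nonneg fun i _ => abs_nonneg _
    have h3 := mul_le_mul_of_nonneg_right (hN n hn).le (hd n)
    linarith [h n]

lemma tsum_le_nine_mul (f G : ℕ → ℝ) (hf : ∀ n, 0 ≤ f n) (hG : ∀ n, 0 ≤ G n) (hs : Summable G)
    (h : ∀ n, f n ≤ 3 * ((if n = 0 then 0 else G (n - 1)) + G n + G (n + 1))) :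
    ∑' n, f n ≤ 9 * ∑' n, G n := by
  have s3 : Summable (fun n => G (n + 1)) := (summable_nat_add_iff 1).2 hs
  have s1 : Summable (fun n => if n = 0 then 0 else G (n - 1)) := by
    rw [← summable_nat_add_iff 1]
    simpa using hs
  have e1 : ∑' n, (if n = 0 then 0 else G (n - 1)) = ∑' n, G n := by
    rw [s1.tsum_eq_zero_add]
    simp
  have e3 : ∑' n, G (n + 1) ≤ ∑' n, G n := by
    rw [hs.tsum_eq_zero_add]
    linarith [hG 0]
  have sg := ((s1.add hs).add s3).mul_left 3
  have hle := (Summable.of_nonneg_of_le hf h sg).tsum_le_tsum h sg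
  rw [tsum_mul_left, (s1.add hs).tsum_add s3, s1.tsum_add hs, e1] at hle
  linarith

lemma norm_add_add_sq_le (x y z : ℂ) :
    ‖x + y + z‖ ^ 2 ≤ 3 * (‖x‖ ^ 2 + ‖y‖ ^ 2 + ‖z‖ ^ 2) := by
  have h := pow_le_pow_left₀ (norm_nonneg _) (norm_add₃_le (a := x) (b := y) (c := z)) 2
  nlinarith [sq_nonneg (‖x‖ - ‖y‖), sq_nonneg (‖x‖ - ‖z‖), sq_nonneg (‖y‖ - ‖z‖)]

theorem stmt9
    (lam : ℕ → ℝ) (hpos : ∀ n, 0 < lam n) (hmono : Monotone lam)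
    (htop : Tendsto lam atTop atTop)
    (b : ℕ → ℕ → ℂ)
    -- tridiagonal: b_{j,k} = 0 whenever |j − k| > 1
    (htri : ∀ j k : ℕ, max j k > min j k + 1 → b j k = 0)
    -- the ratios λ_{n+1}/λ_n are bounded
    (hratio : ∃ M : ℝ, ∀ n, lam (n + 1) / lam n ≤ M)
    -- b_{n,n−1}/λ_n → 0, b_{n,n}/λ_n → 0, b_{n,n+1}/λ_{n+1} → 0
    (hsub : Tendsto (fun n => ‖b (n + 1) n‖ / lam (n + 1)) atTop (𝓝 0))
    (hdiag : Tendsto (fun n => ‖b n n‖ / lam n) atTop (𝓝 0))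
    (hsup : Tendsto (fun n => ‖b n (n + 1)‖ / lam (n + 1)) atTop (𝓝 0)) :
    ∀ r : ℝ, 0 ≤ r → ∀ ε > (0 : ℝ), ∃ C : ℝ,
      ∀ v : ℕ → ℂ, Summable (fun n => lam n ^ (2 * r + 2) * ‖v n‖ ^ 2) →
        ∑' n, lam n ^ (2 * r) *
            ‖(if n = 0 then 0 else b n (n - 1) * v (n - 1)) +
              b n n * v n + b n (n + 1) * v (n + 1)‖ ^ 2 ≤
          C * ∑' n, ‖v n‖ ^ 2 + ε * ∑' n, lam n ^ (2 * r + 2) * ‖v n‖ ^ 2 := by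
  intro r hr ε hε
  obtain ⟨M, hM⟩ := hratio
  have hsplit : ∀ n, lam n ^ (2 * r + 2) = lam n ^ (2 * r) * lam n ^ 2 := fun n => by
    rw [Real.rpow_add (hpos n), Real.rpow_two]
  have hdpos : ∀ n, 0 < lam n ^ (2 * r + 2) := fun n => Real.rpow_pos_of_pos (hpos n) _
  have hrpos : ∀ n, 0 < lam n ^ (2 * r) := fun n => Real.rpow_pos_of_pos (hpos n) _
  have hsq : ∀ {y : ℕ → ℝ}, Tendsto y atTop (𝓝 0) → Tendsto (fun n => y n ^ 2) atTop (𝓝 0) :=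
    fun h => by simpa using h.pow 2
  have hM0 : 0 < M := (div_pos (hpos 1) (hpos 0)).trans_le (hM 0)
  have hδ : 0 < ε / 9 := by positivity
  obtain ⟨K₁, hK₁, h₁⟩ := exists_const_add_bound
    (fun n => lam (n + 1) ^ (2 * r) * ‖b (n + 1) n‖ ^ 2) (fun n => lam n ^ (2 * r + 2)) _
    (M ^ (2 * r + 2)) (ε / 9) hδ (fun n => (hdpos n).le) (hsq hsub) (fun n => by
      have hl : lam (n + 1) ≤ M * lam n := (div_le_iff₀ (hpos n)).1 (hM n)
      have hp : lam (n + 1) ^ (2 * r + 2) ≤ M ^ (2 * r + 2) * lam n ^ (2 * r + 2) := by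
        rw [← Real.mul_rpow hM0.le (hpos n).le]
        exact Real.rpow_le_rpow (hpos _).le hl (by positivity)
      calc lam (n + 1) ^ (2 * r) * ‖b (n + 1) n‖ ^ 2
          = (‖b (n + 1) n‖ / lam (n + 1)) ^ 2 * lam (n + 1) ^ (2 * r + 2) := by
            rw [hsplit]
            field_simp [(hpos (n + 1)).ne']
        _ ≤ (‖b (n + 1) n‖ / lam (n + 1)) ^ 2 * (M ^ (2 * r + 2) * lam n ^ (2 * r + 2)) := by
            gcongr
        _ = _ := by ring)
  obtain ⟨K₂, hK₂, h₂⟩ := exists_const_add_bound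
    (fun n => lam n ^ (2 * r) * ‖b n n‖ ^ 2) (fun n => lam n ^ (2 * r + 2)) _
    1 (ε / 9) hδ (fun n => (hdpos n).le) (hsq hdiag) (fun n => by
      apply le_of_eq
      rw [hsplit]
      field_simp [(hpos n).ne'])
  obtain ⟨K₃, hK₃, h₃⟩ := exists_const_add_bound
    (fun n => lam n ^ (2 * r) * ‖b n (n + 1)‖ ^ 2) (fun n => lam (n + 1) ^ (2 * r + 2)) _
    1 (ε / 9) hδ (fun n => (hdpos _).le) (hsq hsup) (fun n => by
      have hp : lam n ^ (2 * r) ≤ lam (n + 1) ^ (2 * r) :=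
        Real.rpow_le_rpow (hpos n).le (hmono n.le_succ) (by positivity)
      calc lam n ^ (2 * r) * ‖b n (n + 1)‖ ^ 2
          ≤ lam (n + 1) ^ (2 * r) * ‖b n (n + 1)‖ ^ 2 := by gcongr
        _ = _ := by
            rw [hsplit]
            field_simp [(hpos (n + 1)).ne'])
  refine ⟨9 * (K₁ + K₂ + K₃), fun v hv => ?_⟩
  have hu : Summable (fun n => ‖v n‖ ^ 2) := by
    -- `lam n ≥ lam 0 > 0`, so the plain norm is controlled by the `(r + 1)`-norm
    refine Summable.of_nonneg_of_le (fun n => by positivity) (fun n => ?_)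
      (hv.mul_left (lam 0 ^ (2 * r + 2))⁻¹)
    have hp : lam 0 ^ (2 * r + 2) ≤ lam n ^ (2 * r + 2) :=
      Real.rpow_le_rpow (hpos 0).le (hmono n.zero_le) (by positivity)
    rw [← div_eq_inv_mul, le_div_iff₀ (hdpos 0), mul_comm]
    gcongr
  have hK : 0 ≤ K₁ + K₂ + K₃ := by positivity
  have sG := (hu.mul_left (K₁ + K₂ + K₃)).add (hv.mul_left (ε / 9))
  -- a coefficient bound with any constant at most `K₁ + K₂ + K₃` yields a bound by `G m`
  have key : ∀ (m : ℕ) (a k : ℝ) (z : ℂ), a * ‖z‖ ^ 2 ≤ k + ε / 9 * lam m ^ (2 * r + 2) →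
      k ≤ K₁ + K₂ + K₃ → a * ‖z * v m‖ ^ 2 ≤
        (K₁ + K₂ + K₃) * ‖v m‖ ^ 2 + ε / 9 * (lam m ^ (2 * r + 2) * ‖v m‖ ^ 2) := by
    intro m a k z h1 h2
    have h3 := mul_le_mul_of_nonneg_right
      (h1.trans (add_le_add_left h2 (ε / 9 * lam m ^ (2 * r + 2)))) (sq_nonneg ‖v m‖)
    rw [norm_mul]
    linarith
  have main := tsum_le_nine_mul
    (fun n => lam n ^ (2 * r) * ‖(if n = 0 then 0 else b n (n - 1) * v (n - 1)) +
      b n n * v n + b n (n + 1) * v (n + 1)‖ ^ 2)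
    (fun n => (K₁ + K₂ + K₃) * ‖v n‖ ^ 2 + ε / 9 * (lam n ^ (2 * r + 2) * ‖v n‖ ^ 2))
    (fun n => mul_nonneg (hrpos n).le (sq_nonneg _))
    (fun n => by have := hdpos n; positivity) sG (fun n => by
      have hn := mul_le_mul_of_nonneg_left
        (norm_add_add_sq_le (if n = 0 then 0 else b n (n - 1) * v (n - 1)) (b n n * v n)
          (b n (n + 1) * v (n + 1))) (hrpos n).le
      have k2 := key n _ K₂ _ (h₂ n) (by linarith)
      have k3 := key (n + 1) _ K₃ _ (h₃ n) (by linarith)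
      have k1 : lam n ^ (2 * r) * ‖(if n = 0 then 0 else b n (n - 1) * v (n - 1))‖ ^ 2 ≤
          if n = 0 then 0 else (K₁ + K₂ + K₃) * ‖v (n - 1)‖ ^ 2 +
            ε / 9 * (lam (n - 1) ^ (2 * r + 2) * ‖v (n - 1)‖ ^ 2) := by
        cases n with
        | zero => simp
        | succ n => simpa using key n _ K₁ _ (h₁ n) (by linarith)
      linarith)
  rw [(hu.mul_left _).tsum_add (hv.mul_left _), tsum_mul_left, tsum_mul_left] at main
  linarith
end
end

section
/- Let B be tridiagonal and skew-symmetric with matrix elements b_{j,k}, assume the sequence (λ_{n+1}/λ_n)_{n≥1} is bounded and that b_{n,n−1}/λ_n → 0 and b_{n,n}/λ_n → 0 as n → ∞. For u ∈ ℝ define the operator A + uB on D(A) = D(|A|^1) (Bψ ∈ H for ψ ∈ D(A) by relative boundedness), and define its power domains inductively by D((A+uB)^1) := D(A) and D((A+uB)^{m+1}) := {ψ ∈ D((A+uB)^m) : (A+uB)ψ ∈ D((A+uB)^m)}; similarly D(A^m) = D(|A|^m). Then for every positive integer m and every u ∈ ℝ: D((A+uB)^m) = D(|A|^m). -/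
/-!
Write `x n = ⟨φ n, ψ⟩` and `T = A + uB`. In coordinates, `ψ ∈ D(|A|^m)` says that
`lam n ^ m * ‖x n‖` is square summable, and for `ψ ∈ D(A)` the coordinates of `Tψ` are the expected
tridiagonal expressions. By induction on `m` it is enough to show, for `m ≥ 1` and
`ψ ∈ D(|A|^m)`, that `ψ ∈ D(|A|^(m+1))` if and only if `Tψ ∈ D(|A|^m)`.

* `T` maps `D(|A|^(m+1))` into `D(|A|^m)`: the matrix elements of `B` are `O(lam)`, and since
  `lam (n+1) / lam n` is bounded the weights at neighbouring sites are comparable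
  (`summable_weight_of_bound`).
* Conversely, the coordinate equation gives, for large `n`,
  `lam n * ‖x n‖ ≤ ‖(Tψ) n‖ + ε * (neighbouring terms)` with `ε` as small as desired. The last term
  would be absorbed in the left side if `lam n ^ (m+1) * ‖x n‖` were known to be square summable.
  Replacing one factor `lam n` by `min (lam n) R` makes this true because `ψ ∈ D(|A|^m)`. The
  truncated weights have the same monotonicity and growth ratio, so the resulting bound
  (`tsum_sq_le_of_absorb`) is uniform in `R`, and `R → ∞` concludes
  (`summable_weight_of_absorb`).
-/

/- STATEMENT 10 (stability of the domains of powers for tridiagonal perturbations):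
`D((A+uB)^m) = D(|A|^m)` for every positive integer `m` and every `u ∈ ℝ`. -/

open Filter Topology

noncomputable section

/-- The skew-adjoint operator `Aψ = Σ_n (−iλ_n)⟨φ_n,ψ⟩φ_n`. -/
def Aop {H : Type*} [NormedAddCommGroup H] [InnerProductSpace ℂ H] [CompleteSpace H]
    (φ : HilbertBasis ℕ ℂ H) (lam : ℕ → ℝ) (ψ : H) : H :=
  ∑' n, (-(Complex.I * (lam n : ℂ))) • (φ.repr ψ n • φ n)

/-- The tridiagonal operator `Bψ = Σ_n (b_{n,n−1}x_{n−1} + b_{n,n}x_n + b_{n,n+1}x_{n+1})φ_n`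
(with the convention that the subdiagonal term is absent for the first index). -/
def BopTri {H : Type*} [NormedAddCommGroup H] [InnerProductSpace ℂ H] [CompleteSpace H]
    (φ : HilbertBasis ℕ ℂ H) (b : ℕ → ℕ → ℂ) (ψ : H) : H :=
  ∑' n, ((if n = 0 then 0 else b n (n - 1) * φ.repr ψ (n - 1)) +
      b n n * φ.repr ψ n + b n (n + 1) * φ.repr ψ (n + 1)) • φ n

/-- The domain of the `m`-th power of an operator `f` with domain `D1`, defined
inductively: `D(f^1) = D1`, `D(f^{m+1}) = {ψ ∈ D(f^m) : fψ ∈ D(f^m)}`. -/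
def powDom {H : Type*} (f : H → H) (D1 : Set H) : ℕ → Set H
  | 0 => Set.univ
  | 1 => D1
  | (m + 2) => {ψ | ψ ∈ powDom f D1 (m + 1) ∧ f ψ ∈ powDom f D1 (m + 1)}

/-! ### Weighted square-summable sequences -/

/-- Absorption: if a square-summable `a` is dominated, beyond `N`, by `w` plus a small multiple of
its neighbours, then its square sum is controlled by finitely many terms and by `w`. -/
lemma tsum_sq_le_of_absorb (a w : ℕ → ℝ) (N : ℕ) (ha0 : ∀ n, 0 ≤ a n)
    (ha : Summable fun n => a n ^ 2) (hw : Summable fun n => w n ^ 2)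
    (h : ∀ n, N ≤ n → a (n + 1) ≤ w (n + 1) + 1 / 5 * (a n + a (n + 1) + a (n + 2))) :
    ∑' n, a n ^ 2 ≤ 2 * (∑ n ∈ Finset.range (N + 1), a n ^ 2 + 4 * ∑' n, w n ^ 2) := by
  have shift_le : ∀ (f : ℕ → ℝ) (j : ℕ), (Summable fun n => f n ^ 2) →
      ∑' n, f (n + j) ^ 2 ≤ ∑' n, f n ^ 2 := by
    intro f j hf
    have h1 := hf.sum_add_tsum_nat_add j
    have h2 : 0 ≤ ∑ n ∈ Finset.range j, f n ^ 2 := Finset.sum_nonneg fun _ _ => sq_nonneg _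
    linarith
  have sh : ∀ (f : ℕ → ℝ) (j : ℕ), (Summable fun n => f n ^ 2) →
      Summable fun n => f (n + j) ^ 2 := fun f j hf =>
    (summable_nat_add_iff (f := fun n => f n ^ 2) j).2 hf
  have hpt : ∀ n, a (n + (N + 1)) ^ 2 ≤ 4 * w (n + (N + 1)) ^ 2 +
      4 / 25 * (a (n + N) ^ 2 + a (n + (N + 1)) ^ 2 + a (n + (N + 2)) ^ 2) := by
    intro n
    have h1 : a (n + (N + 1)) ≤ w (n + (N + 1)) +
      1 / 5 * (a (n + N) + a (n + (N + 1)) + a (n + (N + 2))) := h (n + N) (by omega)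
    generalize w (n + (N + 1)) = W at *
    have h2 := ha0 (n + (N + 1))
    generalize a (n + (N + 1)) = B at *
    generalize a (n + N) = A at *
    generalize a (n + (N + 2)) = C at *
    have h3 : B ^ 2 ≤ (W + 1 / 5 * (A + B + C)) ^ 2 := pow_le_pow_left₀ h2 h1 2
    nlinarith [sq_nonneg (W - A / 5), sq_nonneg (W - B / 5), sq_nonneg (W - C / 5),
      sq_nonneg (A - B), sq_nonneg (A - C), sq_nonneg (B - C)]
  have hsum : ∑' n, a (n + (N + 1)) ^ 2 ≤ 4 * ∑' n, w (n + (N + 1)) ^ 2 +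
      4 / 25 * (∑' n, a (n + N) ^ 2 + ∑' n, a (n + (N + 1)) ^ 2 + ∑' n, a (n + (N + 2)) ^ 2) := by
    have hs3 := ((sh a N ha).add (sh a (N + 1) ha)).add (sh a (N + 2) ha)
    calc _ ≤ _ := (sh a (N + 1) ha).tsum_le_tsum hpt
          (((sh w (N + 1) hw).mul_left 4).add (hs3.mul_left (4 / 25)))
      _ = _ := by
        rw [((sh w (N + 1) hw).mul_left 4).tsum_add (hs3.mul_left (4 / 25)), tsum_mul_left,
          tsum_mul_left, ((sh a N ha).add (sh a (N + 1) ha)).tsum_add (sh a (N + 2) ha),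
          (sh a N ha).tsum_add (sh a (N + 1) ha)]
  have e := ha.sum_add_tsum_nat_add (N + 1)
  have e0 : 0 ≤ ∑' n, a n ^ 2 := tsum_nonneg fun _ => sq_nonneg _
  -- the three shifted copies of `a` contribute at most `3 * 4 / 25 < 1 / 2` of its square sum
  linarith [shift_le a N ha, shift_le a (N + 1) ha, shift_le a (N + 2) ha,
    shift_le w (N + 1) hw]

/-- Regularity gain: a nonnegative solution of the tridiagonal inequality with small off-diagonal
part gains one power of the weight over its a priori summability. -/
lemma summable_weight_of_absorb (lam x y : ℕ → ℝ) (hpos : ∀ n, 0 < lam n) (hmono : Monotone lam)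
    (M : ℝ) (hM1 : 1 ≤ M) (hM : ∀ n, lam (n + 1) ≤ M * lam n) (k N : ℕ)
    (hx0 : ∀ n, 0 ≤ x n) (hy0 : ∀ n, 0 ≤ y n)
    (hx : Summable fun n => (lam n ^ (k + 1) * x n) ^ 2)
    (hy : Summable fun n => (lam n ^ (k + 1) * y n) ^ 2)
    (h : ∀ n, N ≤ n → lam (n + 1) * x (n + 1) ≤ y (n + 1) + 1 / (5 * M ^ (k + 2)) *
      (lam (n + 1) * x n + lam (n + 1) * x (n + 1) + lam (n + 2) * x (n + 2))) :
    Summable fun n => (lam n ^ (k + 2) * x n) ^ 2 := by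
  have hM0 : 0 < M := by linarith
  have hK : 1 ≤ M ^ (k + 2) := one_le_pow₀ hM1
  have hK0 : 0 < M ^ (k + 2) := by linarith
  have bound : ∀ R, 0 < R → (Summable fun n => (lam n ^ (k + 1) * min (lam n) R * x n) ^ 2) ∧
      ∑' n, (lam n ^ (k + 1) * min (lam n) R * x n) ^ 2 ≤
      2 * (∑ n ∈ Finset.range (N + 1), (lam n ^ (k + 1) * min (lam n) R * x n) ^ 2 +
        4 * ∑' n, (lam n ^ (k + 1) * y n) ^ 2) := by
    intro R hR
    have hp0 : ∀ n, 0 < min (lam n) R := fun n => lt_min (hpos n) hR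
    have ha0 : ∀ n, 0 ≤ lam n ^ (k + 1) * min (lam n) R * x n := fun n =>
      mul_nonneg (mul_nonneg (pow_nonneg (hpos n).le _) (hp0 n).le) (hx0 n)
    have hsm : Summable fun n => (lam n ^ (k + 1) * min (lam n) R * x n) ^ 2 := by
      refine Summable.of_nonneg_of_le (fun _ => sq_nonneg _) (fun n => ?_) (hx.mul_left (R ^ 2))
      rw [← mul_pow]
      refine pow_le_pow_left₀ (ha0 n) ?_ 2
      have : min (lam n) R * (lam n ^ (k + 1) * x n) ≤ R * (lam n ^ (k + 1) * x n) :=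
        mul_le_mul_of_nonneg_right (min_le_right _ _)
          (mul_nonneg (pow_nonneg (hpos n).le _) (hx0 n))
      linarith
    refine ⟨hsm, tsum_sq_le_of_absorb _ _ N ha0 hsm hy fun n hn => ?_⟩
    have hpM : min (lam (n + 1)) R ≤ M * min (lam n) R := by
      rw [mul_min_of_nonneg _ _ hM0.le]
      exact min_le_min (hM n) (by nlinarith)
    have hpm : min (lam (n + 1)) R ≤ min (lam (n + 2)) R :=
      min_le_min (hmono (by omega)) le_rfl
    have hl0 := (hpos n).le
    have hl1 := (hpos (n + 1)).le
    have hl2 := (hpos (n + 2)).le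
    have q0 := (hp0 n).le
    have q1 := (hp0 (n + 1)).le
    have x0 := hx0 n
    have x1 := hx0 (n + 1)
    have x2 := hx0 (n + 2)
    have hmul := mul_le_mul_of_nonneg_left (h n hn)
      (mul_nonneg (pow_nonneg hl1 k) q1)
    have t0 : lam (n + 1) ^ (k + 1) * min (lam (n + 1)) R * x n ≤
        M ^ (k + 2) * (lam n ^ (k + 1) * min (lam n) R * x n) := by
      calc _ ≤ (M * lam n) ^ (k + 1) * (M * min (lam n) R) * x n := by
            gcongr
            exact hM n
        _ = _ := by ring
    have t1 : lam (n + 1) ^ (k + 1) * min (lam (n + 1)) R * x (n + 1) ≤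
        M ^ (k + 2) * (lam (n + 1) ^ (k + 1) * min (lam (n + 1)) R * x (n + 1)) :=
      le_mul_of_one_le_left (ha0 (n + 1)) hK
    have t2 : lam (n + 1) ^ k * min (lam (n + 1)) R * lam (n + 2) * x (n + 2) ≤
        M ^ (k + 2) * (lam (n + 2) ^ (k + 1) * min (lam (n + 2)) R * x (n + 2)) := by
      calc _ ≤ lam (n + 2) ^ k * min (lam (n + 2)) R * lam (n + 2) * x (n + 2) := by
            gcongr
            exact hmono (by omega)
        _ = lam (n + 2) ^ (k + 1) * min (lam (n + 2)) R * x (n + 2) := by ring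
        _ ≤ _ := le_mul_of_one_le_left (ha0 (n + 2)) hK
    have ty : lam (n + 1) ^ k * min (lam (n + 1)) R * y (n + 1) ≤
        lam (n + 1) ^ (k + 1) * y (n + 1) := by
      have hy1 := hy0 (n + 1)
      rw [pow_succ]
      gcongr
      exact min_le_left _ _
    have hε : 0 ≤ 1 / (5 * M ^ (k + 2)) := by positivity
    have t3 := mul_le_mul_of_nonneg_left (add_le_add (add_le_add t0 t1) t2) hε
    have hεK : 1 / (5 * M ^ (k + 2)) * M ^ (k + 2) = 1 / 5 := by field_simp
    have e3 : ∀ a b c : ℝ, 1 / (5 * M ^ (k + 2)) * (M ^ (k + 2) * a + M ^ (k + 2) * b +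
        M ^ (k + 2) * c) = 1 / 5 * (a + b + c) := by
      intro a b c
      rw [← hεK]
      ring
    rw [e3] at t3
    have e1 : lam (n + 1) ^ k * min (lam (n + 1)) R * (lam (n + 1) * x (n + 1)) =
      lam (n + 1) ^ (k + 1) * min (lam (n + 1)) R * x (n + 1) := by ring
    rw [e1] at hmul
    refine hmul.trans ?_
    refine le_trans (le_of_eq ?_) (add_le_add ty t3)
    ring
  refine summable_of_sum_range_le (fun _ => sq_nonneg _) (c := 2 * (∑ n ∈ Finset.range (N + 1),
    (lam n ^ (k + 1) * lam n * x n) ^ 2 + 4 * ∑' n, (lam n ^ (k + 1) * y n) ^ 2)) fun n => ?_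
  -- truncating at `R = lam n` does not affect the first `n` terms
  obtain ⟨hs, hb⟩ := bound (lam n) (hpos n)
  calc ∑ i ∈ Finset.range n, (lam i ^ (k + 2) * x i) ^ 2
      = ∑ i ∈ Finset.range n, (lam i ^ (k + 1) * min (lam i) (lam n) * x i) ^ 2 := by
        refine Finset.sum_congr rfl fun i hi => ?_
        rw [min_eq_left (hmono (Finset.mem_range.1 hi).le)]
        ring
    _ ≤ ∑' i, (lam i ^ (k + 1) * min (lam i) (lam n) * x i) ^ 2 :=
        hs.sum_le_tsum _ fun _ _ => sq_nonneg _
    _ ≤ _ := hb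
    _ ≤ _ := by
        have : ∀ i, (lam i ^ (k + 1) * min (lam i) (lam n) * x i) ^ 2 ≤
            (lam i ^ (k + 1) * lam i * x i) ^ 2 := by
          intro i
          have h1 := (hpos i).le
          have h2 : 0 ≤ min (lam i) (lam n) := (lt_min (hpos i) (hpos n)).le
          have h3 := hx0 i
          gcongr
          exact min_le_left _ _
        have := Finset.sum_le_sum fun i (_ : i ∈ Finset.range (N + 1)) => this i
        linarith

/-- A sequence bounded by `C` times the tridiagonal expression in `lam` and `x` loses at most one
power of the weight. -/
lemma summable_weight_of_bound (lam x c : ℕ → ℝ) (hpos : ∀ n, 0 < lam n) (hmono : Monotone lam)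
    (M : ℝ) (hM1 : 1 ≤ M) (hM : ∀ n, lam (n + 1) ≤ M * lam n) (m : ℕ) (C : ℝ) (hC : 0 ≤ C)
    (hx0 : ∀ n, 0 ≤ x n) (hc0 : ∀ n, 0 ≤ c n)
    (hx : Summable fun n => (lam n ^ (m + 1) * x n) ^ 2)
    (h : ∀ n, c (n + 1) ≤ C *
      (lam (n + 1) * x n + lam (n + 1) * x (n + 1) + lam (n + 2) * x (n + 2))) :
    Summable fun n => (lam n ^ m * c n) ^ 2 := by
  have hK : 1 ≤ M ^ (m + 1) := one_le_pow₀ hM1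
  have hM0 : 0 < M := by linarith
  have hz0 : ∀ n, 0 ≤ lam n ^ (m + 1) * x n := fun n =>
    mul_nonneg (pow_nonneg (hpos n).le _) (hx0 n)
  have sh : ∀ j, Summable fun n => (lam (n + j) ^ (m + 1) * x (n + j)) ^ 2 := fun j =>
    (summable_nat_add_iff (f := fun n => (lam n ^ (m + 1) * x n) ^ 2) j).2 hx
  rw [← summable_nat_add_iff 1]
  refine Summable.of_nonneg_of_le (fun _ => sq_nonneg _) (fun n => ?_)
    ((((sh 0).add (sh 1)).add (sh 2)).mul_left (3 * (C * M ^ (m + 1)) ^ 2))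
  have hl0 := (hpos n).le
  have hl1 := (hpos (n + 1)).le
  have hl2 := (hpos (n + 2)).le
  have x0 := hx0 n
  have x1 := hx0 (n + 1)
  have x2 := hx0 (n + 2)
  have t0 : lam (n + 1) ^ (m + 1) * x n ≤ M ^ (m + 1) * (lam n ^ (m + 1) * x n) := by
    calc _ ≤ (M * lam n) ^ (m + 1) * x n := by
          gcongr
          exact hM n
      _ = _ := by ring
  have t1 := le_mul_of_one_le_left (hz0 (n + 1)) hK
  have t2 : lam (n + 1) ^ m * lam (n + 2) * x (n + 2) ≤
      M ^ (m + 1) * (lam (n + 2) ^ (m + 1) * x (n + 2)) := by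
    calc _ ≤ lam (n + 2) ^ m * lam (n + 2) * x (n + 2) := by
          gcongr
          exact hmono (by omega)
      _ = lam (n + 2) ^ (m + 1) * x (n + 2) := by ring
      _ ≤ _ := le_mul_of_one_le_left (hz0 (n + 2)) hK
  have h1 := mul_le_mul_of_nonneg_left (h n) (pow_nonneg hl1 m)
  have h2 := mul_le_mul_of_nonneg_left (add_le_add (add_le_add t0 t1) t2) hC
  have h3 : lam (n + 1) ^ m * c (n + 1) ≤ C * M ^ (m + 1) * (lam n ^ (m + 1) * x n +
      lam (n + 1) ^ (m + 1) * x (n + 1) + lam (n + 2) ^ (m + 1) * x (n + 2)) := by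
    refine h1.trans (le_trans (le_of_eq ?_) (h2.trans (le_of_eq ?_))) <;> ring
  have h4 := pow_le_pow_left₀ (mul_nonneg (pow_nonneg hl1 m) (hc0 (n + 1))) h3 2
  refine h4.trans ?_
  simp only [add_zero]
  rw [mul_pow]
  generalize lam n ^ (m + 1) * x n = A
  generalize lam (n + 1) ^ (m + 1) * x (n + 1) = B
  generalize lam (n + 2) ^ (m + 1) * x (n + 2) = D
  have : (A + B + D) ^ 2 ≤ 3 * (A ^ 2 + B ^ 2 + D ^ 2) := by
    nlinarith [sq_nonneg (A - B), sq_nonneg (A - D), sq_nonneg (B - D)]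
  nlinarith [mul_le_mul_of_nonneg_left this (sq_nonneg (C * M ^ (m + 1)))]

/-! ### Coordinates in the Hilbert basis -/

lemma mem_domAs_natCast {H : Type*} [NormedAddCommGroup H] [InnerProductSpace ℂ H]
    (φ : HilbertBasis ℕ ℂ H) (lam : ℕ → ℝ) (m : ℕ) (ψ : H) :
    ψ ∈ domAs φ lam (m : ℝ) ↔ Summable fun n => (lam n ^ m * ‖φ.repr ψ n‖) ^ 2 := by
  have : ∀ n, lam n ^ (2 * (m : ℝ)) * ‖φ.repr ψ n‖ ^ 2 = (lam n ^ m * ‖φ.repr ψ n‖) ^ 2 := by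
    intro n
    have h : (2 * (m : ℝ)) = ((2 * m : ℕ) : ℝ) := by push_cast; ring
    rw [h, Real.rpow_natCast]
    ring
  simp only [domAs, Set.mem_ofPred_eq, this]

lemma repr_tsum_smul {H : Type*} [NormedAddCommGroup H] [InnerProductSpace ℂ H]
    (φ : HilbertBasis ℕ ℂ H) (c : ℕ → ℂ) (hc : Summable fun n => ‖c n‖ ^ 2) (n : ℕ) :
    φ.repr (∑' n, c n • φ n) n = c n := by
  have hmem : Memℓp c 2 := by
    rw [memℓp_gen_iff (by norm_num)]
    simpa using hc
  have h := φ.hasSum_repr_symm ⟨c, hmem⟩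
  have h' : HasSum (fun n => c n • φ n) (φ.repr.symm ⟨c, hmem⟩) := h
  rw [h'.tsum_eq, LinearIsometryEquiv.apply_symm_apply]

/-- The coordinates of `Bψ` as prescribed by the matrix of `B`, for `ψ` with coordinates `x`. -/
def triCoeff (b : ℕ → ℕ → ℂ) (x : ℕ → ℂ) (n : ℕ) : ℂ :=
  (if n = 0 then 0 else b n (n - 1) * x (n - 1)) + b n n * x n + b n (n + 1) * x (n + 1)

/-- A row of the tridiagonal matrix is controlled by the weights as soon as its entries are. -/
lemma norm_triCoeff_succ_le (lam : ℕ → ℝ) (b : ℕ → ℕ → ℂ) (x : ℕ → ℂ)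
    (hskew : ∀ j k : ℕ, b k j = -(starRingEnd ℂ) (b j k)) (C : ℝ) (n : ℕ)
    (h1 : ‖b (n + 1) n‖ ≤ C * lam (n + 1)) (h2 : ‖b (n + 2) (n + 1)‖ ≤ C * lam (n + 2))
    (h3 : ‖b (n + 1) (n + 1)‖ ≤ C * lam (n + 1)) :
    ‖triCoeff b x (n + 1)‖ ≤ C *
      (lam (n + 1) * ‖x n‖ + lam (n + 1) * ‖x (n + 1)‖ + lam (n + 2) * ‖x (n + 2)‖) := by
  have h4 : ‖b (n + 1) (n + 2)‖ ≤ C * lam (n + 2) := by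
    rw [hskew (n + 2) (n + 1), norm_neg, RCLike.norm_conj]
    exact h2
  simp only [triCoeff, Nat.succ_ne_zero, if_false, Nat.add_sub_cancel]
  refine (norm_add₃_le).trans ?_
  rw [norm_mul, norm_mul, norm_mul]
  have e1 := mul_le_mul_of_nonneg_right h1 (norm_nonneg (x n))
  have e2 := mul_le_mul_of_nonneg_right h3 (norm_nonneg (x (n + 1)))
  have e3 := mul_le_mul_of_nonneg_right h4 (norm_nonneg (x (n + 2)))
  change ‖b (n + 1) n‖ * ‖x n‖ + ‖b (n + 1) (n + 1)‖ * ‖x (n + 1)‖ +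
    ‖b (n + 1) (n + 2)‖ * ‖x (n + 2)‖ ≤ _
  linarith

/-! ### Domains of the powers -/

theorem stmt10 {H : Type*} [NormedAddCommGroup H] [InnerProductSpace ℂ H] [CompleteSpace H]
    (φ : HilbertBasis ℕ ℂ H) (lam : ℕ → ℝ)
    (hpos : ∀ n, 0 < lam n) (hmono : Monotone lam) (htop : Tendsto lam atTop atTop)
    (b : ℕ → ℕ → ℂ)
    -- tridiagonal and skew-symmetric matrix elements
    (htri : ∀ j k : ℕ, max j k > min j k + 1 → b j k = 0)
    (hskew : ∀ j k : ℕ, b k j = -(starRingEnd ℂ) (b j k))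
    (hratio : ∃ M : ℝ, ∀ n, lam (n + 1) / lam n ≤ M)
    (hsub : Tendsto (fun n => ‖b (n + 1) n‖ / lam (n + 1)) atTop (𝓝 0))
    (hdiag : Tendsto (fun n => ‖b n n‖ / lam n) atTop (𝓝 0)) :
    ∀ u : ℝ, ∀ m : ℕ, 1 ≤ m →
      powDom (fun ψ => Aop φ lam ψ + (u : ℂ) • BopTri φ b ψ) (domAs φ lam 1) m =
        domAs φ lam (m : ℝ) := by
  intro u
  obtain ⟨M₀, hM₀⟩ := hratio
  obtain ⟨M, hM1, hM⟩ : ∃ M : ℝ, 1 ≤ M ∧ ∀ n, lam (n + 1) ≤ M * lam n :=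
    ⟨max M₀ 1, le_max_right _ _, fun n =>
      (div_le_iff₀ (hpos n)).1 ((hM₀ n).trans (le_max_left _ _))⟩
  obtain ⟨C, hC, hC1, hC2⟩ : ∃ C : ℝ, 0 ≤ C ∧ (∀ n, ‖b (n + 1) n‖ ≤ C * lam (n + 1)) ∧
      ∀ n, ‖b n n‖ ≤ C * lam n := by
    obtain ⟨C₁, h₁⟩ := hsub.bddAbove_range
    obtain ⟨C₂, h₂⟩ := hdiag.bddAbove_range
    refine ⟨max 0 (max C₁ C₂), le_max_left _ _, fun n => ?_, fun n => ?_⟩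
    · refine (div_le_iff₀ (hpos _)).1 ((h₁ ⟨n, rfl⟩).trans ?_)
      exact (le_max_left _ _).trans (le_max_right _ _)
    · refine (div_le_iff₀ (hpos _)).1 ((h₂ ⟨n, rfl⟩).trans ?_)
      exact (le_max_right _ _).trans (le_max_right _ _)
  have hB : ∀ (m : ℕ) (ψ : H), ψ ∈ domAs φ lam ((m + 1 : ℕ) : ℝ) →
      Summable fun n => (lam n ^ m * ‖triCoeff b (φ.repr ψ) n‖) ^ 2 := by
    intro m ψ hψ
    rw [mem_domAs_natCast φ lam] at hψ
    exact summable_weight_of_bound lam (fun n => ‖φ.repr ψ n‖) _ hpos hmono M hM1 hM m C hC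
      (fun _ => norm_nonneg _) (fun _ => norm_nonneg _) hψ fun n =>
      norm_triCoeff_succ_le lam b _ hskew C n (hC1 n) (hC1 (n + 1)) (hC2 (n + 1))
  have hnormA : ∀ (ψ : H) n, ‖-(Complex.I * (lam n : ℂ)) * φ.repr ψ n‖ =
      lam n * ‖φ.repr ψ n‖ := by
    intro ψ n
    simp [abs_of_pos (hpos n)]
  have hcoef : ∀ ψ : H, ψ ∈ domAs φ lam 1 → ∀ n,
      φ.repr (Aop φ lam ψ + (u : ℂ) • BopTri φ b ψ) n =
        -(Complex.I * (lam n : ℂ)) * φ.repr ψ n + (u : ℂ) * triCoeff b (φ.repr ψ) n := by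
    intro ψ hψ n
    have hψ' : ψ ∈ domAs φ lam ((0 + 1 : ℕ) : ℝ) := by simpa using hψ
    have h1 := repr_tsum_smul φ (triCoeff b (φ.repr ψ)) (by simpa using hB 0 ψ hψ') n
    have h2 := repr_tsum_smul φ (fun n => -(Complex.I * (lam n : ℂ)) * φ.repr ψ n) (by
      simp only [hnormA]
      simpa using (mem_domAs_natCast φ lam _ ψ).1 hψ') n
    rw [map_add, map_smul, lp.coeFn_add, lp.coeFn_smul, Pi.add_apply, Pi.smul_apply, smul_eq_mul]
    congr 1
    · simpa only [Aop, smul_smul] using h2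
    · exact congrArg _ h1
  have hanti : ∀ k : ℕ, domAs φ lam ((k + 2 : ℕ) : ℝ) ⊆ domAs φ lam ((k + 1 : ℕ) : ℝ) := by
    intro k ψ hψ
    rw [mem_domAs_natCast φ lam] at hψ ⊢
    refine Summable.of_nonneg_of_le (fun _ => sq_nonneg _) (fun n => ?_)
      (hψ.mul_left ((1 / lam 0) ^ 2))
    rw [← mul_pow]
    have h0 := hpos 0
    have hn := (hpos n).le
    refine pow_le_pow_left₀ (by positivity) ?_ 2
    have : 1 ≤ 1 / lam 0 * lam n := by
      rw [one_div_mul_eq_div, one_le_div h0]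
      exact hmono (Nat.zero_le n)
    calc lam n ^ (k + 1) * ‖φ.repr ψ n‖
        ≤ (1 / lam 0 * lam n) * (lam n ^ (k + 1) * ‖φ.repr ψ n‖) :=
          le_mul_of_one_le_left (by positivity) this
      _ = _ := by ring
  have hdom1 : ∀ k : ℕ, domAs φ lam ((k + 1 : ℕ) : ℝ) ⊆ domAs φ lam 1 := by
    intro k
    induction k with
    | zero => simp
    | succ k ih => exact (hanti k).trans ih
  have hforward : ∀ (k : ℕ) (ψ : H), ψ ∈ domAs φ lam ((k + 2 : ℕ) : ℝ) →
      Aop φ lam ψ + (u : ℂ) • BopTri φ b ψ ∈ domAs φ lam ((k + 1 : ℕ) : ℝ) := by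
    intro k ψ hψ
    have hc := hcoef ψ (hdom1 (k + 1) hψ)
    have hb := hB (k + 1) ψ hψ
    rw [mem_domAs_natCast φ lam] at hψ ⊢
    refine Summable.of_nonneg_of_le (fun _ => sq_nonneg _) (fun n => ?_)
      ((hψ.mul_left 2).add (hb.mul_left (2 * u ^ 2)))
    have h1 := norm_add_le (-(Complex.I * (lam n : ℂ)) * φ.repr ψ n)
      ((u : ℂ) * triCoeff b (φ.repr ψ) n)
    rw [← hc n, hnormA, norm_mul, Complex.norm_real, Real.norm_eq_abs] at h1
    have hn := (hpos n).le
    have h2 := mul_le_mul_of_nonneg_left h1 (pow_nonneg hn (k + 1))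
    have h3 := pow_le_pow_left₀ (by positivity) h2 2
    refine h3.trans ?_
    rw [← sq_abs u]
    generalize ‖triCoeff b (φ.repr ψ) n‖ = T
    generalize ‖φ.repr ψ n‖ = X
    have h4 := sq_nonneg (lam n ^ (k + 2) * X - |u| * (lam n ^ (k + 1) * T))
    have h5 : (lam n ^ (k + 1) * (lam n * X + |u| * T)) ^ 2 +
        (lam n ^ (k + 2) * X - |u| * (lam n ^ (k + 1) * T)) ^ 2 =
        2 * (lam n ^ (k + 2) * X) ^ 2 + 2 * |u| ^ 2 * (lam n ^ (k + 1) * T) ^ 2 := by ring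
    linarith
  have hback : ∀ (k : ℕ) (ψ : H), ψ ∈ domAs φ lam ((k + 1 : ℕ) : ℝ) →
      Aop φ lam ψ + (u : ℂ) • BopTri φ b ψ ∈ domAs φ lam ((k + 1 : ℕ) : ℝ) →
      ψ ∈ domAs φ lam ((k + 2 : ℕ) : ℝ) := by
    intro k ψ hψ hTψ
    have hc := hcoef ψ (hdom1 k hψ)
    rw [mem_domAs_natCast φ lam] at hψ hTψ ⊢
    have hM0 : 0 < M := by linarith
    -- entries of `B` below `δ * lam` make `|u| * B` at most `1 / (5 * M ^ (k + 2))` times `lam`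
    set δ : ℝ := 1 / (5 * M ^ (k + 2)) / (|u| + 1) with hδ
    have hu : 0 < |u| + 1 := by positivity
    have hδ0 : 0 < δ := by positivity
    have huδ : |u| * δ ≤ 1 / (5 * M ^ (k + 2)) := by
      rw [hδ, mul_div_assoc', div_le_iff₀ hu, mul_comm]
      exact mul_le_mul_of_nonneg_left (by linarith) (by positivity)
    obtain ⟨N, hN⟩ := eventually_atTop.1
      ((hsub.eventually (gt_mem_nhds hδ0)).and (hdiag.eventually (gt_mem_nhds hδ0)))
    refine summable_weight_of_absorb lam (fun n => ‖φ.repr ψ n‖) _ hpos hmono M hM1 hM k N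
      (fun _ => norm_nonneg _) (fun _ => norm_nonneg _) hψ hTψ fun n hn => ?_
    have hb := norm_triCoeff_succ_le lam b (φ.repr ψ) hskew δ n
      ((div_le_iff₀ (hpos _)).1 (hN n hn).1.le)
      ((div_le_iff₀ (hpos _)).1 (hN (n + 1) (by omega)).1.le)
      ((div_le_iff₀ (hpos _)).1 (hN (n + 1) (by omega)).2.le)
    have hl1 := (hpos (n + 1)).le
    have hl2 := (hpos (n + 2)).le
    have hS : 0 ≤ lam (n + 1) * ‖φ.repr ψ n‖ + lam (n + 1) * ‖φ.repr ψ (n + 1)‖ +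
      lam (n + 2) * ‖φ.repr ψ (n + 2)‖ := by positivity
    have h1 := norm_sub_le (φ.repr (Aop φ lam ψ + (u : ℂ) • BopTri φ b ψ) (n + 1))
      ((u : ℂ) * triCoeff b (φ.repr ψ) (n + 1))
    rw [hc (n + 1), add_sub_cancel_right, ← hc (n + 1), hnormA, norm_mul, Complex.norm_real,
      Real.norm_eq_abs] at h1
    have h2 := mul_le_mul_of_nonneg_left hb (abs_nonneg u)
    have h3 := mul_le_mul_of_nonneg_right huδ hS
    rw [← mul_assoc] at h2
    exact h1.trans (add_le_add le_rfl (h2.trans h3))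
  intro m hm
  obtain ⟨k, rfl⟩ : ∃ k, m = k + 1 := ⟨m - 1, by omega⟩
  clear hm
  induction k with
  | zero => simp [powDom]
  | succ k ih =>
    ext ψ
    simp only [powDom, Set.mem_ofPred_eq, ih]
    exact ⟨fun h => hback k ψ h.1 h.2, fun h => ⟨hanti k h, hforward k ψ h⟩⟩
end
end

section
/- Let k be a positive integer and let B be tridiagonal and skew-symmetric with matrix elements b_{j,k}. Assume the sequence (λ_{n+1}/λ_n)_{n≥1} is bounded, that b_{n,n−1}/λ_n → 0 and b_{n,n}/λ_n → 0 as n → ∞, and that C := sup_{n≥1} |b_{n,n+1}| (λ_{n+1}^k/λ_n^k − 1) < ∞. Then for every ψ ∈ D(|A|^k) (writing x_j = ⟨φ_j,ψ⟩), Bψ is a well-defined element of H and |Re ⟨|A|^k ψ, Bψ⟩| ≤ C Σ_{j≥1} λ_j^k |x_j|² = C ⟨|A|^k ψ, ψ⟩; i.e. the system (A,B) is k-weakly-coupled with coupling constant c_k(A,B) ≤ sup_n |b_{n,n+1}|(λ_{n+1}^k/λ_n^k − 1). -/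
/-!
Write `x n = ⟨φ n, ψ⟩`. All series are handled through their coefficient sequences in `ℓ²`.

*Well-definedness.* The decay hypotheses on the sub- and main diagonal give `‖b (n+1) n‖ ≤ K λ (n+1)`
and `‖b n n‖ ≤ L λ n`; with skew-symmetry and `λ (n+1) ≤ M λ n`, every entry of `B` adjacent to
index `n` is `O(λ n)`. Since `λ` is bounded below by `λ 0 > 0` and `k ≥ 1`, square-summability of
`λ n ^ k ‖x n‖` gives that of `λ n ‖x n‖`, hence of the coefficients of `Bψ`.

*Estimate.* With `p n = Re (conj (x n) b_{n,n+1} x (n+1))`, skew-symmetry kills the diagonal and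
turns the `n`-th term of `Re ⟨|A|^k ψ, Bψ⟩` into `λ n ^ k (p n - p (n-1))` (`re_term_succ`).
Summation by parts (`tsum_shift`) gives
`Re ⟨|A|^k ψ, Bψ⟩ = ∑ (λ n ^ k - λ (n+1) ^ k) p n`. By the bound defining `C`, Young's inequality
and monotonicity of `λ`, the `n`-th term is at most
`C / 2 (λ n ^ k ‖x n‖² + λ (n+1) ^ k ‖x (n+1)‖²)` in absolute value (`abs_commutator_term_le`),
and summing over `n` gives the estimate.
-/


/- STATEMENT 11 (tridiagonal systems are k-weakly-coupled):
`|Re ⟨|A|^k ψ, Bψ⟩| ≤ C ⟨|A|^k ψ, ψ⟩` with `C = sup_n |b_{n,n+1}|(λ_{n+1}^k/λ_n^k − 1)`. -/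

open Filter Topology
open scoped ComplexInnerProductSpace

noncomputable section

/-- Square-summable coefficients, packaged as an element of `ℓ²`. -/
def toL2 (c : ℕ → ℂ) (hc : Summable fun n => ‖c n‖ ^ 2) : lp (fun _ : ℕ => ℂ) 2 :=
  ⟨c, memℓp_gen (by simpa using hc)⟩

lemma hasSum_toL2 {H : Type*} [NormedAddCommGroup H] [InnerProductSpace ℂ H]
    (φ : HilbertBasis ℕ ℂ H) (c : ℕ → ℂ) (hc : Summable fun n => ‖c n‖ ^ 2) :
    HasSum (fun n => c n • φ n) (φ.repr.symm (toL2 c hc)) :=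
  φ.hasSum_repr_symm (toL2 c hc)

/-- Parseval's identity, for the real part of the inner product of two series. -/
lemma hasSum_re_inner {H : Type*} [NormedAddCommGroup H] [InnerProductSpace ℂ H]
    (φ : HilbertBasis ℕ ℂ H) (c d : ℕ → ℂ) (hc : Summable fun n => ‖c n‖ ^ 2)
    (hd : Summable fun n => ‖d n‖ ^ 2) :
    HasSum (fun n => (d n * (starRingEnd ℂ) (c n)).re)
      (⟪∑' n, c n • φ n, ∑' n, d n • φ n⟫).re := by
  rw [(hasSum_toL2 φ c hc).tsum_eq, (hasSum_toL2 φ d hd).tsum_eq,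
    LinearIsometryEquiv.inner_map_map]
  exact Complex.hasSum_re (lp.hasSum_inner (𝕜 := ℂ) (toL2 c hc) (toL2 d hd))

lemma summable_sq_add {f g : ℕ → ℂ} (hf : Summable fun n => ‖f n‖ ^ 2)
    (hg : Summable fun n => ‖g n‖ ^ 2) : Summable fun n => ‖f n + g n‖ ^ 2 := by
  refine Summable.of_nonneg_of_le (fun _ => by positivity) (fun n => ?_)
    ((hf.add hg).mul_left 2)
  nlinarith [norm_add_le (f n) (g n), norm_nonneg (f n + g n), sq_nonneg (‖f n‖ - ‖g n‖)]

lemma summable_sq_of_le {f : ℕ → ℂ} {g : ℕ → ℝ} (K : ℝ)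
    (hg : Summable fun n => g n ^ 2) (h : ∀ n, ‖f n‖ ≤ K * g n) :
    Summable fun n => ‖f n‖ ^ 2 := by
  refine Summable.of_nonneg_of_le (fun _ => by positivity) (fun n => ?_) (hg.mul_left (K ^ 2))
  rw [← mul_pow]
  exact pow_le_pow_left₀ (norm_nonneg _) (h n) 2

/-- A product of two square-summable sequences is summable, and so is any sequence dominated
by it. -/
lemma summable_of_abs_le_mul {f g : ℕ → ℂ} {p : ℕ → ℝ} (hf : Summable fun n => ‖f n‖ ^ 2)
    (hg : Summable fun n => ‖g n‖ ^ 2) (h : ∀ n, |p n| ≤ ‖f n‖ * ‖g n‖) : Summable p := by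
  refine Summable.of_norm_bounded (hf.add hg) (fun n => ?_)
  rw [Real.norm_eq_abs]
  nlinarith [h n, sq_nonneg (‖f n‖ - ‖g n‖), sq_nonneg (‖f n‖), sq_nonneg (‖g n‖)]

/-- Skew-symmetry: the diagonal contributes nothing to the real part, and the subdiagonal entry
contributes the negative of the superdiagonal one. -/
lemma re_term_succ (l : ℝ) (a d e x y z : ℂ) (hd : d = -(starRingEnd ℂ) d) :
    ((-(starRingEnd ℂ) a * x + d * y + e * z) * (starRingEnd ℂ) ((l : ℂ) * y)).re =
      l * ((starRingEnd ℂ) y * e * z).re - l * ((starRingEnd ℂ) x * a * y).re := by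
  have hd' : d.re = 0 := by
    have := congrArg Complex.re hd
    simp at this
    linarith
  simp [hd']
  ring

/-- One term after summation by parts; `s` and `t` stand for `λ n ^ k` and `λ (n+1) ^ k`. -/
lemma abs_commutator_term_le (s t C : ℝ) (a x y : ℂ) (hs : 0 < s) (hst : s ≤ t)
    (hC : ‖a‖ * (t / s - 1) ≤ C) :
    |s * ((starRingEnd ℂ) x * a * y).re - t * ((starRingEnd ℂ) x * a * y).re| ≤
      C / 2 * (s * ‖x‖ ^ 2 + t * ‖y‖ ^ 2) := by
  have hp : |((starRingEnd ℂ) x * a * y).re| ≤ ‖x‖ * ‖a‖ * ‖y‖ := by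
    refine (Complex.abs_re_le_norm _).trans ?_
    simp
  have h1 : ‖a‖ * (t - s) ≤ C * s := by
    have := mul_le_mul_of_nonneg_right hC hs.le
    calc ‖a‖ * (t - s) = ‖a‖ * (t / s - 1) * s := by field_simp
      _ ≤ _ := this
  have hC0 : 0 ≤ C := by
    refine le_trans (mul_nonneg (norm_nonneg _) ?_) hC
    rw [sub_nonneg, le_div_iff₀ hs]
    linarith
  rw [← sub_mul, abs_mul, abs_of_nonpos (by linarith : s - t ≤ 0)]
  calc -(s - t) * |((starRingEnd ℂ) x * a * y).re|
      ≤ -(s - t) * (‖x‖ * ‖a‖ * ‖y‖) := mul_le_mul_of_nonneg_left hp (by linarith)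
    _ = (‖a‖ * (t - s)) * (‖x‖ * ‖y‖) := by ring
    _ ≤ (C * s) * (‖x‖ * ‖y‖) := mul_le_mul_of_nonneg_right h1 (by positivity)
    _ ≤ (C * s) * ((‖x‖ ^ 2 + ‖y‖ ^ 2) / 2) :=
        mul_le_mul_of_nonneg_left (by nlinarith [sq_nonneg (‖x‖ - ‖y‖)]) (by positivity)
    _ = C / 2 * (s * ‖x‖ ^ 2 + s * ‖y‖ ^ 2) := by ring
    _ ≤ _ := by gcongr

/-- Summation by parts for a sequence of the form `F n - G (n - 1)`. -/
lemma tsum_shift {T F G : ℕ → ℝ} (hF : Summable F) (hG : Summable G) (h0 : T 0 = F 0)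
    (hS : ∀ n, T (n + 1) = F (n + 1) - G n) : HasSum T (∑' n, (F n - G n)) := by
  have hFs : HasSum (fun n => F (n + 1)) (∑' n, F n - F 0) := by
    simpa using (hasSum_nat_add_iff' 1).2 hF.hasSum
  have := hFs.sub hG.hasSum
  rw [hF.tsum_sub hG]
  refine (hasSum_nat_add_iff' 1).1 ?_
  simp only [hS, Finset.sum_range_one, h0]
  convert this using 1
  ring

theorem stmt11 {H : Type*} [NormedAddCommGroup H] [InnerProductSpace ℂ H] [CompleteSpace H]
    (φ : HilbertBasis ℕ ℂ H) (lam : ℕ → ℝ)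
    (hpos : ∀ n, 0 < lam n) (hmono : Monotone lam) (htop : Tendsto lam atTop atTop)
    (b : ℕ → ℕ → ℂ)
    (htri : ∀ j k : ℕ, max j k > min j k + 1 → b j k = 0)
    (hskew : ∀ j k : ℕ, b k j = -(starRingEnd ℂ) (b j k))
    (hratio : ∃ M : ℝ, ∀ n, lam (n + 1) / lam n ≤ M)
    (hsub : Tendsto (fun n => ‖b (n + 1) n‖ / lam (n + 1)) atTop (𝓝 0))
    (hdiag : Tendsto (fun n => ‖b n n‖ / lam n) atTop (𝓝 0))
    (k : ℕ) (hk : 0 < k)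
    (C : ℝ) (hC : ∀ n, ‖b n (n + 1)‖ * (lam (n + 1) ^ k / lam n ^ k - 1) ≤ C) :
    ∀ ψ ∈ domAs φ lam (k : ℝ),
      (Summable fun n =>
        ((if n = 0 then 0 else b n (n - 1) * φ.repr ψ (n - 1)) +
          b n n * φ.repr ψ n + b n (n + 1) * φ.repr ψ (n + 1)) • φ n) ∧
      |(⟪absApow φ lam (k : ℝ) ψ, BopTri φ b ψ⟫).re| ≤
        C * ∑' n, lam n ^ (k : ℝ) * ‖φ.repr ψ n‖ ^ 2 := by
  intro ψ hψ
  set x : ℕ → ℂ := fun n => φ.repr ψ n with hx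
  change (Summable fun n => ((if n = 0 then 0 else b n (n - 1) * x (n - 1)) +
          b n n * x n + b n (n + 1) * x (n + 1)) • φ n) ∧ _
  set u : ℕ → ℂ := fun n => (if n = 0 then 0 else b n (n - 1) * x (n - 1)) +
          b n n * x n + b n (n + 1) * x (n + 1) with hu
  have hψ' : Summable fun n => (lam n ^ k * ‖x n‖) ^ 2 := by
    refine Summable.congr hψ fun n => ?_
    rw [mul_pow, ← pow_mul]
    congr 1
    rw [← Real.rpow_natCast]
    push_cast
    ring_nf
  have hl0 := hpos 0
  have hle : ∀ n, lam 0 ≤ lam n := fun n => hmono (Nat.zero_le n)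
  obtain ⟨m, rfl⟩ : ∃ m, k = m + 1 := ⟨k - 1, by omega⟩
  have h1 : Summable fun n => (lam n * ‖x n‖) ^ 2 := by
    have hb : ∀ n, ‖((lam n * ‖x n‖ : ℝ) : ℂ)‖ ≤
        (lam 0 ^ m)⁻¹ * (lam n ^ (m + 1) * ‖x n‖) := by
      intro n
      have hn := hpos n
      rw [Complex.norm_real, Real.norm_of_nonneg (by positivity),
        ← div_eq_inv_mul, le_div_iff₀ (by positivity), pow_succ]
      have := pow_le_pow_left₀ hl0.le (hle n) m
      have h2 : 0 ≤ lam n * ‖x n‖ := by positivity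
      nlinarith
    refine (summable_sq_of_le _ hψ' hb).congr fun n => ?_
    rw [Complex.norm_real, Real.norm_eq_abs, sq_abs]
  have hw : Summable fun n => lam n ^ (m + 1) * ‖x n‖ ^ 2 := by
    refine Summable.of_nonneg_of_le (fun n => ?_) (fun n => ?_)
      (hψ'.mul_left (lam 0 ^ (m + 1))⁻¹)
    · have := hpos n
      positivity
    · have hn := hpos n
      rw [← div_eq_inv_mul, le_div_iff₀ (by positivity)]
      have := pow_le_pow_left₀ hl0.le (hle n) (m + 1)
      have h2 : 0 ≤ lam n ^ (m + 1) * ‖x n‖ ^ 2 := by positivity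
      nlinarith
  have hc : Summable fun n => ‖((lam n ^ (m + 1) : ℝ) : ℂ) * x n‖ ^ 2 := by
    refine hψ'.congr fun n => ?_
    have := hpos n
    rw [norm_mul, Complex.norm_real, Real.norm_of_nonneg (by positivity)]
  obtain ⟨K, hK⟩ := hsub.bddAbove_range
  obtain ⟨L, hL⟩ := hdiag.bddAbove_range
  obtain ⟨M, hM⟩ := hratio
  have hK' : ∀ n, ‖b (n + 1) n‖ ≤ K * lam (n + 1) := fun n =>
    (div_le_iff₀ (hpos _)).1 (hK ⟨n, rfl⟩)
  have hL' : ∀ n, ‖b n n‖ ≤ L * lam n := fun n => (div_le_iff₀ (hpos _)).1 (hL ⟨n, rfl⟩)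
  have hM' : ∀ n, lam (n + 1) ≤ M * lam n := fun n => (div_le_iff₀ (hpos _)).1 (hM n)
  have hK0 : 0 ≤ K := (div_nonneg (norm_nonneg _) (hpos 1).le).trans (hK ⟨0, rfl⟩)
  have hnorm : ∀ n, ‖b n (n + 1)‖ = ‖b (n + 1) n‖ := fun n => by
    rw [hskew n (n + 1), norm_neg, RCLike.norm_conj]
  have hsubS : Summable fun n => ‖b (n + 1) n * x n‖ ^ 2 := by
    refine summable_sq_of_le (K * M) h1 fun n => ?_
    rw [norm_mul]
    calc ‖b (n + 1) n‖ * ‖x n‖ ≤ (K * (M * lam n)) * ‖x n‖ := by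
          refine mul_le_mul_of_nonneg_right ((hK' n).trans ?_) (norm_nonneg _)
          exact mul_le_mul_of_nonneg_left (hM' n) hK0
      _ = _ := by ring
  have hdiagS : Summable fun n => ‖b n n * x n‖ ^ 2 := by
    refine summable_sq_of_le L h1 fun n => ?_
    rw [norm_mul, ← mul_assoc]
    exact mul_le_mul_of_nonneg_right (hL' n) (norm_nonneg _)
  have hsupS : Summable fun n => ‖b n (n + 1) * x (n + 1)‖ ^ 2 := by
    refine summable_sq_of_le K ((summable_nat_add_iff 1).2 h1) fun n => ?_
    rw [norm_mul, ← mul_assoc, hnorm]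
    exact mul_le_mul_of_nonneg_right (hK' n) (norm_nonneg _)
  have hd : Summable fun n => ‖u n‖ ^ 2 := by
    refine summable_sq_add (summable_sq_add ?_ hdiagS) hsupS
    refine (summable_nat_add_iff 1).1 ?_
    simpa using hsubS
  refine ⟨(hasSum_toL2 φ u hd).summable, ?_⟩
  have hA : absApow φ lam ((m + 1 : ℕ) : ℝ) ψ =
      ∑' n, (((lam n ^ (m + 1) : ℝ) : ℂ) * x n) • φ n := by
    unfold absApow
    refine tsum_congr fun n => ?_
    rw [Real.rpow_natCast, mul_smul]
    rfl
  have hB : BopTri φ b ψ = ∑' n, u n • φ n := rfl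
  have hsum := hasSum_re_inner φ _ u hc hd
  rw [hA, hB]
  set p : ℕ → ℝ := fun n => ((starRingEnd ℂ) (x n) * b n (n + 1) * x (n + 1)).re with hp
  have hpb : ∀ n, |p n| ≤ ‖x n‖ * ‖b n (n + 1)‖ * ‖x (n + 1)‖ := fun n => by
    refine (Complex.abs_re_le_norm _).trans ?_
    simp
  have hF : Summable fun n => lam n ^ (m + 1) * p n := by
    refine summable_of_abs_le_mul hc hsupS fun n => ?_
    have := hpos n
    rw [abs_mul, abs_of_pos (by positivity), norm_mul, norm_mul, Complex.norm_real,
      Real.norm_of_nonneg (by positivity), mul_assoc]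
    refine mul_le_mul_of_nonneg_left ((hpb n).trans_eq (by ring)) (by positivity)
  have hG : Summable fun n => lam (n + 1) ^ (m + 1) * p n := by
    refine summable_of_abs_le_mul ((summable_nat_add_iff 1).2 hc) hsubS fun n => ?_
    have := hpos (n + 1)
    rw [abs_mul, abs_of_pos (by positivity), norm_mul, norm_mul, Complex.norm_real,
      Real.norm_of_nonneg (by positivity), mul_assoc, ← hnorm]
    refine mul_le_mul_of_nonneg_left ((hpb n).trans_eq (by ring)) (by positivity)
  have hT := tsum_shift hF hG
    (T := fun n => (u n * (starRingEnd ℂ) (((lam n ^ (m + 1) : ℝ) : ℂ) * x n)).re)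
    (by
      have := re_term_succ (lam 0 ^ (m + 1)) 0 (b 0 0) (b 0 1) 0 (x 0) (x 1) (hskew 0 0)
      simp only [map_zero, zero_mul, mul_zero, Complex.zero_re, sub_zero, neg_zero] at this
      simpa only [hu, if_true] using this)
    (fun n => by
      have := re_term_succ (lam (n + 1) ^ (m + 1)) (b n (n + 1)) (b (n + 1) (n + 1))
        (b (n + 1) (n + 2)) (x n) (x (n + 1)) (x (n + 2)) (hskew _ _)
      rw [← hskew n (n + 1)] at this
      exact this)
  rw [hsum.unique hT]
  have hC0 : 0 ≤ C := by
    refine le_trans (mul_nonneg (norm_nonneg _) ?_) (hC 0)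
    rw [sub_nonneg, le_div_iff₀ (by positivity), one_mul]
    exact pow_le_pow_left₀ hl0.le (hle 1) _
  have hw' := (summable_nat_add_iff 1).2 hw
  have hbd := tsum_of_norm_bounded ((hw.add hw').mul_left (C / 2)).hasSum
    (f := fun n => lam n ^ (m + 1) * p n - lam (n + 1) ^ (m + 1) * p n) fun n =>
      abs_commutator_term_le _ _ C _ _ _ (pow_pos (hpos n) _)
        (pow_le_pow_left₀ (hpos n).le (hmono n.le_succ) _) (hC n)
  rw [Real.norm_eq_abs] at hbd
  refine hbd.trans ?_
  simp only [Real.rpow_natCast]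
  rw [tsum_mul_left, hw.tsum_add hw']
  have h0 := hw.tsum_eq_zero_add
  have hnn : 0 ≤ lam 0 ^ (m + 1) * ‖x 0‖ ^ 2 := by positivity
  change _ ≤ C * ∑' n, lam n ^ (m + 1) * ‖x n‖ ^ 2
  nlinarith
end
end

section
/- Let N ≥ 1 and let B be an N×N complex matrix with B_{p,q} = 0 whenever |p−q| > 1, and set L(j) := max{|B_{p,q}| : 1 ≤ p,q ≤ min(j,N)} for j ≥ 1. Then for every m ≥ 1, every diagonal unitary N×N matrices D_1,…,D_m, and every l with 1 ≤ l ≤ N: ‖B D_1 B D_2 ⋯ B D_m e_l‖ ≤ 3^m ∏_{j=l+1}^{l+m} L(j), where e_l is the l-th standard basis vector of ℂ^N and ‖·‖ is the Euclidean norm. If moreover the diagonal of B vanishes (B_{p,p} = 0 for all p), the bound improves to ‖B D_1 B D_2 ⋯ B D_m e_l‖ ≤ 2^m ∏_{j=l+1}^{l+m} L(j). -/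
/-!
The Euclidean norm is dominated by the `ℓ¹` norm, and the `ℓ¹` norm behaves well under each factor
`B * D`. If `v` is supported on the (1-based) indices `≤ k`, then `B D v` is supported on the
indices `≤ k + 1`, because `D` is diagonal and `B` is tridiagonal. The entries of `D` have modulus
at most one, and every column `q ≤ k` of `B` has at most `c` nonzero entries (`c = 3`, or `c = 2`
when the diagonal vanishes), each of modulus at most `L (k + 1)`. Hence
`‖B D v‖₁ ≤ c * L (k + 1) * ‖v‖₁`, and iterating from `e_l`, where `k = l` and `‖e_l‖₁ = 1`,
gives the claim.
-/

open scoped BigOperators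

noncomputable section

/-- Column sums of a tridiagonal matrix: the support of column `q` is mapped by `Fin.val` into a
set `s` of at most `c` naturals, which is where the constants `3` and `2` come from. -/
lemma tridiag_col_sum_le {N : ℕ} (B : Matrix (Fin N) (Fin N) ℂ)
    (htri : ∀ p q : Fin N, ((p : ℤ) - (q : ℤ)).natAbs > 1 → B p q = 0) (L : ℕ → ℝ)
    (hL : ∀ j : ℕ, ∀ p q : Fin N, (p : ℕ) + 1 ≤ j → (q : ℕ) + 1 ≤ j → ‖B p q‖ ≤ L j)
    {c k : ℕ} {q : Fin N} (hq : (q : ℕ) + 1 ≤ k) (s : Finset ℕ) (hs : s.card ≤ c)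
    (hsupp : ∀ p : Fin N, B p q ≠ 0 → (p : ℕ) ∈ s) :
    ∑ p, ‖B p q‖ ≤ c * L (k + 1) := by
  classical
  have hL0 : 0 ≤ L (k + 1) := (norm_nonneg _).trans (hL (k + 1) q q (by omega) (by omega))
  have hcard : (Finset.univ.filter fun p : Fin N => B p q ≠ 0).card ≤ c := by
    refine le_trans (Finset.card_le_card_of_injOn (fun p : Fin N => (p : ℕ)) ?_
      (Fin.val_injective.injOn)) hs
    intro p hp
    exact hsupp p (by simpa using hp)
  calc ∑ p, ‖B p q‖
      = ∑ p ∈ Finset.univ.filter (fun p : Fin N => B p q ≠ 0), ‖B p q‖ := by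
        refine (Finset.sum_filter_of_ne ?_).symm
        intro p _ h
        simpa using h
    _ ≤ (Finset.univ.filter fun p : Fin N => B p q ≠ 0).card • L (k + 1) := by
        refine Finset.sum_le_card_nsmul _ _ _ ?_
        intro p hp
        have hne : B p q ≠ 0 := by simpa using hp
        have hband : ¬ ((p : ℤ) - (q : ℤ)).natAbs > 1 := fun h => hne (htri p q h)
        exact hL (k + 1) p q (by omega) (by omega)
    _ ≤ c * L (k + 1) := by
        rw [nsmul_eq_mul]
        gcongr

/-- The support and `ℓ¹` bounds after applying all factors, by induction on the list of diagonal
matrices; the constant `c` bounds the column sums relative to `L`. -/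
lemma tridiag_prod_bound {N : ℕ} (B : Matrix (Fin N) (Fin N) ℂ)
    (htri : ∀ p q : Fin N, ((p : ℤ) - (q : ℤ)).natAbs > 1 → B p q = 0) (L : ℕ → ℝ) (c : ℕ)
    (hL0 : ∀ k, 1 ≤ k → 0 ≤ L k)
    (hcol : ∀ (k : ℕ) (q : Fin N), (q : ℕ) + 1 ≤ k → ∑ p, ‖B p q‖ ≤ c * L (k + 1))
    (l : ℕ) (e : Fin N → ℂ) (he : ∀ q : Fin N, e q = if (q : ℕ) + 1 = l then 1 else 0)
    (Ds : List (Matrix (Fin N) (Fin N) ℂ))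
    (hdiag : ∀ D ∈ Ds, D.IsDiag) (hnorm : ∀ D ∈ Ds, ∀ q, ‖D q q‖ ≤ 1) :
    (∀ q : Fin N, l + Ds.length < (q : ℕ) + 1 → ((Ds.map (B * ·)).prod.mulVec e) q = 0) ∧
      ∑ q, ‖((Ds.map (B * ·)).prod.mulVec e) q‖ ≤
        (c : ℝ) ^ Ds.length * ∏ j ∈ Finset.Icc (l + 1) (l + Ds.length), L j := by
  induction Ds with
  | nil =>
    constructor
    · intro q hq
      simp only [List.length_nil, add_zero] at hq
      simp [he, show (q : ℕ) + 1 ≠ l by omega]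
    · have hle : (Finset.univ.filter fun q : Fin N => (q : ℕ) + 1 = l).card ≤ 1 := by
        rw [Finset.card_le_one]
        intro a ha b hb
        simp only [Finset.mem_filter, Finset.mem_univ, true_and] at ha hb
        exact Fin.ext (by omega)
      simp only [List.map_nil, List.prod_nil, Matrix.one_mulVec, he, apply_ite norm, norm_one,
        norm_zero, Finset.sum_boole]
      simpa using hle
  | cons D Ds ih =>
    obtain ⟨hsupp, hsum⟩ := ih (fun D' h => hdiag D' (List.mem_cons_of_mem _ h))
      (fun D' h => hnorm D' (List.mem_cons_of_mem _ h))
    set v := (Ds.map (B * ·)).prod.mulVec e with hv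
    have hD := hdiag D List.mem_cons_self
    have hDn := hnorm D List.mem_cons_self
    have hstep : ∀ p, (((D :: Ds).map (B * ·)).prod.mulVec e) p
        = ∑ q, B p q * (D q q * v q) := by
      intro p
      rw [List.map_cons, List.prod_cons, ← Matrix.mulVec_mulVec, ← hv, ← Matrix.mulVec_mulVec]
      have hDv : ∀ q, D.mulVec v q = D q q * v q := by
        intro q
        rw [Matrix.mulVec_eq_sum, Finset.sum_apply, Finset.sum_eq_single q]
        · simp
        · intro r _ hr
          simp [hD hr.symm]
        · simp
      simp only [← hDv]
      rfl
    constructor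
    · intro p hp
      rw [List.length_cons] at hp
      rw [hstep]
      refine Finset.sum_eq_zero fun q _ => ?_
      by_cases hq : l + Ds.length < (q : ℕ) + 1
      · rw [hsupp q hq, mul_zero, mul_zero]
      · rw [htri p q (by omega), zero_mul]
    · have hLk : 0 ≤ L (l + Ds.length + 1) := hL0 _ (by omega)
      calc ∑ p, ‖(((D :: Ds).map (B * ·)).prod.mulVec e) p‖
          ≤ ∑ p, ∑ q, ‖B p q‖ * ‖v q‖ := by
            refine Finset.sum_le_sum fun p _ => ?_
            rw [hstep]
            refine (norm_sum_le _ _).trans (Finset.sum_le_sum fun q _ => ?_)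
            rw [norm_mul, norm_mul]
            gcongr
            exact mul_le_of_le_one_left (norm_nonneg _) (hDn q)
        _ = ∑ q, (∑ p, ‖B p q‖) * ‖v q‖ := by
            rw [Finset.sum_comm]
            simp_rw [Finset.sum_mul]
        _ ≤ ∑ q, (c * L (l + Ds.length + 1)) * ‖v q‖ := by
            refine Finset.sum_le_sum fun q _ => ?_
            by_cases hq : l + Ds.length < (q : ℕ) + 1
            · simp [hsupp q hq]
            · exact mul_le_mul_of_nonneg_right (hcol _ q (by omega)) (norm_nonneg _)
        _ = (c * L (l + Ds.length + 1)) * ∑ q, ‖v q‖ := by rw [Finset.mul_sum]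
        _ ≤ (c * L (l + Ds.length + 1)) *
              ((c : ℝ) ^ Ds.length * ∏ j ∈ Finset.Icc (l + 1) (l + Ds.length), L j) := by
            gcongr
        _ = _ := by
            rw [List.length_cons, ← add_assoc, Finset.prod_Icc_succ_top (by omega), pow_succ]
            ring

lemma sqrt_sum_norm_sq_le_sum_norm {N : ℕ} (v : Fin N → ℂ) :
    Real.sqrt (∑ q, ‖v q‖ ^ 2) ≤ ∑ q, ‖v q‖ :=
  Real.sqrt_le_iff.mpr ⟨Finset.sum_nonneg fun _ _ => norm_nonneg _,
    Finset.sum_sq_le_sq_sum_of_nonneg fun _ _ => norm_nonneg _⟩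

theorem stmt12 (N : ℕ) (hN : 1 ≤ N)
    (B : Matrix (Fin N) (Fin N) ℂ)
    -- B is tridiagonal (indices read 1-based: entry (p,q) has 1-based indices p+1, q+1)
    (htri : ∀ p q : Fin N, ((p : ℤ) - (q : ℤ)).natAbs > 1 → B p q = 0)
    -- L j bounds the moduli of all entries with (1-based) indices ≤ min(j,N)
    (L : ℕ → ℝ)
    (hL : ∀ j : ℕ, ∀ p q : Fin N, (p : ℕ) + 1 ≤ j → (q : ℕ) + 1 ≤ j → ‖B p q‖ ≤ L j)
    (m : ℕ) (hm : 1 ≤ m)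
    (D : Fin m → Matrix (Fin N) (Fin N) ℂ)
    (hDdiag : ∀ i, (D i).IsDiag)
    (hDunit : ∀ i, D i ∈ Matrix.unitaryGroup (Fin N) ℂ)
    (l : ℕ) (hl : 1 ≤ l) (hlN : l ≤ N)
    -- e is the l-th standard basis vector (1-based)
    (e : Fin N → ℂ) (he : ∀ q : Fin N, e q = if (q : ℕ) + 1 = l then 1 else 0) :
    Real.sqrt (∑ q, ‖((List.ofFn fun i : Fin m => B * D i).prod.mulVec e) q‖ ^ 2) ≤
        3 ^ m * ∏ j ∈ Finset.Icc (l + 1) (l + m), L j ∧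
      ((∀ p : Fin N, B p p = 0) →
        Real.sqrt (∑ q, ‖((List.ofFn fun i : Fin m => B * D i).prod.mulVec e) q‖ ^ 2) ≤
          2 ^ m * ∏ j ∈ Finset.Icc (l + 1) (l + m), L j) := by
  have hL0 : ∀ k, 1 ≤ k → 0 ≤ L k := fun k hk =>
    (norm_nonneg _).trans (hL k ⟨0, hN⟩ ⟨0, hN⟩ (by simpa using hk) (by simpa using hk))
  have key : ∀ c : ℕ,
      (∀ (k : ℕ) (q : Fin N), (q : ℕ) + 1 ≤ k → ∑ p, ‖B p q‖ ≤ c * L (k + 1)) →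
      Real.sqrt (∑ q, ‖((List.ofFn fun i : Fin m => B * D i).prod.mulVec e) q‖ ^ 2) ≤
        (c : ℝ) ^ m * ∏ j ∈ Finset.Icc (l + 1) (l + m), L j := by
    intro c hcol
    have h := (tridiag_prod_bound B htri L c hL0 hcol l e he (List.ofFn D)
      (by simpa [List.mem_ofFn] using hDdiag)
      (by
        intro M hM q
        obtain ⟨i, rfl⟩ := List.mem_ofFn.mp hM
        exact entry_norm_bound_of_unitary (hDunit i) q q)).2
    rw [List.map_ofFn, List.length_ofFn] at h
    exact (sqrt_sum_norm_sq_le_sum_norm _).trans h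
  have hnear : ∀ p q : Fin N, B p q ≠ 0 →
      (p : ℕ) = q - 1 ∨ (p : ℕ) = q ∨ (p : ℕ) = q + 1 := by
    intro p q hpq
    have hband : ¬ ((p : ℤ) - (q : ℤ)).natAbs > 1 := fun h => hpq (htri p q h)
    omega
  constructor
  · refine key 3 fun k q hq => tridiag_col_sum_le B htri L hL hq
      {(q : ℕ) - 1, (q : ℕ), (q : ℕ) + 1} Finset.card_le_three fun p hp => ?_
    simpa using hnear p q hp
  · intro h0
    -- For `q = 0` the truncated `q - 1` equals `q`, which only enlarges the set.
    refine key 2 fun k q hq => tridiag_col_sum_le B htri L hL hq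
      {(q : ℕ) - 1, (q : ℕ) + 1} Finset.card_le_two fun p hp => ?_
    have hne : (p : ℕ) ≠ q := fun h => hp (by rw [Fin.ext h, h0])
    have := hnear p q hp
    simp only [Finset.mem_insert, Finset.mem_singleton]
    omega
end
end

section
/- For every positive integer k and every integer n ≥ 1: √n · ((n + 1/2)^k − (n − 1/2)^k) ≤ (3^k − 1) · (n − 1/2)^k. Equivalently, sup_{n≥1} √n ((n+1/2)^k/(n−1/2)^k − 1) ≤ 3^k − 1. -/
/-! With `a = n − 1/2` and `b = n + 1/2 = a + 1`, the factorisations of `b^k − a^k` and `3^k − 1`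
as geometric sums reduce the claim to `√n ≤ 2a` and `b ≤ 3a`, both valid for `n ≥ 1`. The comparison
of the two sums is carried out by induction on `k`. -/

/-- Term-by-term comparison of `s (b^k − a^k) = s ∑ b^j a^(k-1-j)` (where `b = a + 1`) with
`(3^k − 1) a^k = 2a ∑ (3a)^j a^(k-1-j)`. -/
lemma mul_pow_sub_pow_le (a s : ℝ) (ha : 1 / 2 ≤ a) (hsa : s ≤ 2 * a) (k : ℕ) :
    s * ((a + 1) ^ k - a ^ k) ≤ ((3 : ℝ) ^ k - 1) * a ^ k := by
  induction k with
  | zero => simp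
  | succ k ih =>
    have hpow : (a + 1) ^ k ≤ (3 * a) ^ k := pow_le_pow_left₀ (by linarith) (by linarith) k
    have hlast : s * (a + 1) ^ k ≤ 2 * a * (3 * a) ^ k :=
      mul_le_mul hsa hpow (by positivity) (by linarith)
    calc s * ((a + 1) ^ (k + 1) - a ^ (k + 1))
        = a * (s * ((a + 1) ^ k - a ^ k)) + s * (a + 1) ^ k := by ring
      _ ≤ a * (((3 : ℝ) ^ k - 1) * a ^ k) + 2 * a * (3 * a) ^ k :=
          add_le_add (mul_le_mul_of_nonneg_left ih (by linarith)) hlast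
      _ = ((3 : ℝ) ^ (k + 1) - 1) * a ^ (k + 1) := by rw [mul_pow]; ring

/- STATEMENT 16 (bound on the coupling constant of the quantum harmonic oscillator):
`√n ((n + 1/2)^k − (n − 1/2)^k) ≤ (3^k − 1)(n − 1/2)^k` for positive integers `k, n`. -/

theorem stmt16 (k : ℕ) (hk : 0 < k) (n : ℕ) (hn : 1 ≤ n) :
    Real.sqrt n * (((n : ℝ) + 1 / 2) ^ k - ((n : ℝ) - 1 / 2) ^ k) ≤
      ((3 : ℝ) ^ k - 1) * ((n : ℝ) - 1 / 2) ^ k := by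
  have hn' : (1 : ℝ) ≤ n := by exact_mod_cast hn
  have hsqrt : Real.sqrt n ≤ 2 * ((n : ℝ) - 1 / 2) :=
    Real.sqrt_le_iff.mpr ⟨by linarith, by nlinarith⟩
  have h := mul_pow_sub_pow_le ((n : ℝ) - 1 / 2) (Real.sqrt n)
    (by linarith) hsqrt k
  rwa [show (n : ℝ) - 1 / 2 + 1 = n + 1 / 2 by ring] at h
end
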